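/- arXiv:2201.08632 — 3 statements merged into one kernel-verified Lean document; each statement's English description precedes it below -/
import Mathlib

section
/- Let q be a prime power and let ν, m₁, m₂, t be positive integers with m₁ ≥ m₂ ≥ t+1 and 2ν ≥ 2m₁ + m₂ + t + 3, and suppose moreover that m₂ ≤ 2t and (m₁,m₂,t) ∉ {(2,2,1), (3,2,1)}. Suppose ℱ₁ ⊆ 𝒫_{m₁} and ℱ₂ ⊆ 𝒫_{m₂} are non-trivial cross t-intersecting families such that |ℱ₁|·|ℱ₂| ≥ |𝒢₁|·|𝒢₂| for every pair of non-trivial cross t-intersecting families 𝒢₁ ⊆ 𝒫_{m₁}, 𝒢₂ ⊆ 𝒫_{m₂}. Then there exists S ∈ 𝒫_{t+1} such that either (i) ℱ₁ = 𝒞₃(S;m₁) and ℱ₂ = 𝒞₄(S;m₂,t), or (ii) m₁ = m₂ and ℱ₁ = 𝒞₄(S;m₁,t) and ℱ₂ = 𝒞₃(S;m₂). -/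
open Finset Module

noncomputable section

/-- Gaussian binomial coefficient `[n choose k]_q` as a rational number. -/
def gaussBinom (q n k : ℕ) : ℚ :=
  ∏ i ∈ Finset.range k, ((q : ℚ) ^ ((n : ℤ) - i) - 1) / ((q : ℚ) ^ ((k : ℤ) - i) - 1)

/-- `N'(a; m; 2ν)`, the number of `m`-dim totally isotropic subspaces containing
a fixed `a`-dim one. -/
def Nprime (q a m ν : ℕ) : ℚ :=
  ∏ i ∈ Finset.Icc 1 (m - a), ((q : ℚ) ^ (2 * ((ν : ℤ) - m + i)) - 1) / ((q : ℚ) ^ (i : ℤ) - 1)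

variable {K V : Type*} [Field K] [AddCommGroup V] [Module K V]

/-- A subspace is totally isotropic w.r.t. the bilinear form `f`. -/
def TotallyIsotropic (f : V →ₗ[K] V →ₗ[K] K) (W : Submodule K V) : Prop :=
  ∀ x ∈ W, ∀ y ∈ W, f x y = 0

/-- `polar f m` = `𝒫_m`, the set of `m`-dimensional totally isotropic subspaces. -/
def polar (f : V →ₗ[K] V →ₗ[K] K) (m : ℕ) : Set (Submodule K V) :=
  {W | TotallyIsotropic f W ∧ finrank K W = m}

/-- `X` is a `t`-cover of the family `ℱ`. -/
def IsTCover (f : V →ₗ[K] V →ₗ[K] K) (t : ℕ) (ℱ : Set (Submodule K V))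
    (X : Submodule K V) : Prop :=
  TotallyIsotropic f X ∧ ∀ F ∈ ℱ, t ≤ finrank K ↥(X ⊓ F)

/-- `τ_t(ℱ)`, the minimum dimension of a `t`-cover of `ℱ`. -/
def tauCover (f : V →ₗ[K] V →ₗ[K] K) (t : ℕ) (ℱ : Set (Submodule K V)) : ℕ :=
  sInf {x | ∃ X, IsTCover f t ℱ X ∧ finrank K ↥X = x}

def C1 (f : V →ₗ[K] V →ₗ[K] K) (M T : Submodule K V) (m t : ℕ) : Set (Submodule K V) :=
  {F | F ∈ polar f m ∧ T ≤ F ∧ t + 1 ≤ finrank K ↥(F ⊓ M)}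

def C2 (f : V →ₗ[K] V →ₗ[K] K) (M T : Submodule K V) (m : ℕ) : Set (Submodule K V) :=
  {F | F ∈ polar f m ∧ T ≤ F} ∪ {F | F ∈ polar f m ∧ F ≤ M}

def C3 (f : V →ₗ[K] V →ₗ[K] K) (S : Submodule K V) (m : ℕ) : Set (Submodule K V) :=
  {F | F ∈ polar f m ∧ S ≤ F}

def C4 (f : V →ₗ[K] V →ₗ[K] K) (S : Submodule K V) (m t : ℕ) : Set (Submodule K V) :=
  {F | F ∈ polar f m ∧ t ≤ finrank K ↥(F ⊓ S)}

def s0 (q ν m s t : ℕ) : ℚ :=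
  gaussBinom q (s - t) 1 * Nprime q (t + 1) m ν - q * gaussBinom q (s - t) 2 * Nprime q (t + 2) m ν



section helpers

open Classical

lemma aux_fr_span {K V : Type*} [Field K] [AddCommGroup V] [Module K V] [FiniteDimensional K V]
    (T : Submodule K V) (z : V) (hz : z ∉ T) :
    finrank K ↥(T ⊔ Submodule.span K {z}) = finrank K T + 1 := by
  have h := Submodule.finrank_sup_add_finrank_inf_eq T (Submodule.span K {z})
  have hz0 : z ≠ 0 := fun h => hz (h ▸ T.zero_mem)
  have h1 : finrank K ↥(Submodule.span K {z}) = 1 := finrank_span_singleton hz0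
  have h2 : T ⊓ Submodule.span K {z} = ⊥ := by
    rw [eq_bot_iff]
    rintro x ⟨hx1, hx2⟩
    obtain ⟨c, rfl⟩ := Submodule.mem_span_singleton.1 hx2
    by_cases hc : c = 0
    · simp [hc]
    · exact absurd ((T.smul_mem_iff hc).1 hx1) hz
  rw [h2, h1, finrank_bot] at h
  omega

lemma aux_sup_span_le {K V : Type*} [Field K] [AddCommGroup V] [Module K V]
    (T F : Submodule K V) (z : V) :
    T ⊔ Submodule.span K {z} ≤ F ↔ T ≤ F ∧ z ∈ F := by
  rw [sup_le_iff, Submodule.span_singleton_le_iff_mem]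

lemma aux_between {K V : Type*} [Field K] [AddCommGroup V] [Module K V] [FiniteDimensional K V]
    (A B : Submodule K V) (hAB : A ≤ B) (n : ℕ) (h1 : finrank K A ≤ n) (h2 : n ≤ finrank K B) :
    ∃ U, A ≤ U ∧ U ≤ B ∧ finrank K U = n := by
  induction n, h1 using Nat.le_induction with
  | base => exact ⟨A, le_rfl, hAB, rfl⟩
  | succ n hn ih =>
    obtain ⟨U, hU1, hU2, hU3⟩ := ih (by omega)
    have : ∃ z ∈ B, z ∉ U := by
      by_contra hcon
      push Not at hcon
      have := Submodule.finrank_mono (show B ≤ U from hcon)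
      omega
    obtain ⟨z, hz, hzU⟩ := this
    refine ⟨U ⊔ Submodule.span K {z}, hU1.trans le_sup_left, (aux_sup_span_le _ _ _).2 ⟨hU2, hz⟩, ?_⟩
    rw [aux_fr_span _ _ hzU, hU3]

lemma aux_inf_dim {K V : Type*} [Field K] [AddCommGroup V] [Module K V] [FiniteDimensional K V]
    (F U G : Submodule K V) (h : U ≤ G) :
    finrank K ↥(F ⊓ G) + finrank K U ≤ finrank K ↥(F ⊓ U) + finrank K G := by
  have h1 := Submodule.finrank_sup_add_finrank_inf_eq (F ⊓ G) U
  have h2 : (F ⊓ G) ⊓ U = F ⊓ U := by rw [inf_assoc, inf_eq_right.2 h]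
  have h3 : finrank K ↥((F ⊓ G) ⊔ U) ≤ finrank K G :=
    Submodule.finrank_mono (sup_le inf_le_right h)
  rw [h2] at h1
  omega

lemma aux_ti_mono {K V : Type*} [Field K] [AddCommGroup V] [Module K V]
    {f : V →ₗ[K] V →ₗ[K] K} {A B : Submodule K V} (h : A ≤ B) (hB : TotallyIsotropic f B) :
    TotallyIsotropic f A := fun x hx y hy => hB x (h hx) y (h hy)

lemma aux_skew {K V : Type*} [Field K] [AddCommGroup V] [Module K V]
    {f : V →ₗ[K] V →ₗ[K] K} (halt : ∀ x, f x x = 0) (x y : V) : f y x = - f x y := by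
  have h := halt (x + y)
  simp only [map_add, LinearMap.add_apply, halt, zero_add, add_zero] at h
  linear_combination h

lemma aux_ti_span {K V : Type*} [Field K] [AddCommGroup V] [Module K V]
    {f : V →ₗ[K] V →ₗ[K] K} (halt : ∀ x, f x x = 0) {T : Submodule K V}
    (hT : TotallyIsotropic f T) (z : V) (hz : ∀ x ∈ T, f x z = 0) :
    TotallyIsotropic f (T ⊔ Submodule.span K {z}) := by
  intro x hx y hy
  obtain ⟨a, ha, b, hb, rfl⟩ := Submodule.mem_sup.1 hx
  obtain ⟨a', ha', b', hb', rfl⟩ := Submodule.mem_sup.1 hy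
  obtain ⟨c, rfl⟩ := Submodule.mem_span_singleton.1 hb
  obtain ⟨c', rfl⟩ := Submodule.mem_span_singleton.1 hb'
  have h1 : f z a' = 0 := by rw [aux_skew halt a' z, hz a' ha', neg_zero]
  simp [hT a ha a' ha', hz a ha, h1, halt]

/-- members of `Y` above `S` -/
def upF {K V : Type*} [Field K] [AddCommGroup V] [Module K V]
    (Y : Finset (Submodule K V)) (S : Submodule K V) : Finset (Submodule K V) :=
  Y.filter (fun F => S ≤ F)

lemma mem_upF {K V : Type*} [Field K] [AddCommGroup V] [Module K V]
    {Y : Finset (Submodule K V)} {S F : Submodule K V} : F ∈ upF Y S ↔ F ∈ Y ∧ S ≤ F := by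
  simp [upF]

lemma aux_card_sub {K V : Type*} [Field K] [Fintype K] [AddCommGroup V] [Module K V] [Fintype V]
    (A : Submodule K V) :
    (univ.filter (fun z : V => z ∈ A)).card = Fintype.card K ^ finrank K A := by
  rw [← Module.card_eq_pow_finrank (K := K) (V := A), Fintype.card_subtype]

lemma aux_card_diff {K V : Type*} [Field K] [Fintype K] [AddCommGroup V] [Module K V] [Fintype V]
    (A B : Submodule K V) (h : A ≤ B) :
    ((univ.filter (fun z : V => z ∈ B ∧ z ∉ A)).card : ℝ)
      = (Fintype.card K : ℝ) ^ finrank K B - (Fintype.card K : ℝ) ^ finrank K A := by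
  have h1 : (univ.filter (fun z : V => z ∈ B ∧ z ∉ A))
      = (univ.filter (fun z : V => z ∈ B)) \ (univ.filter (fun z : V => z ∈ A)) := by
    ext z; simp
  have h2 : (univ.filter (fun z : V => z ∈ A)) ⊆ (univ.filter (fun z : V => z ∈ B)) := by
    intro z; simpa using fun hz => h hz
  rw [h1, Finset.cast_card_sdiff h2, aux_card_sub, aux_card_sub]
  push_cast; rfl

/-- vector double counting -/
lemma aux_dc {K V : Type*} [Field K] [Fintype K] [AddCommGroup V] [Module K V] [Fintype V]
    (Y : Finset (Submodule K V)) (T W : Submodule K V) (hTW : T ≤ W) (hY : ∀ F ∈ Y, T ≤ F) :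
    ∑ z ∈ univ.filter (fun z : V => z ∈ W ∧ z ∉ T), ((upF Y (T ⊔ Submodule.span K {z})).card : ℝ)
      = ∑ F ∈ Y, ((Fintype.card K : ℝ) ^ finrank K ↥(F ⊓ W)
          - (Fintype.card K : ℝ) ^ finrank K T) := by
  have h1 : ∀ z : V, ((upF Y (T ⊔ Submodule.span K {z})).card : ℝ)
      = ∑ F ∈ Y, if z ∈ F then (1:ℝ) else 0 := by
    intro z
    rw [upF, Finset.card_filter]
    push_cast
    refine Finset.sum_congr rfl fun F hF => ?_
    simp only [aux_sup_span_le, hY F hF, true_and]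
  simp_rw [h1]
  rw [Finset.sum_comm]
  refine Finset.sum_congr rfl fun F hF => ?_
  rw [← aux_card_diff T (F ⊓ W) (le_inf (hY F hF) hTW), Finset.sum_boole, Finset.filter_filter]
  congr 2
  ext z
  simp [Submodule.mem_inf]
  tauto

/-- hyperplanes of `S`, i.e. subspaces of dimension `n` -/
def subsF {K V : Type*} [Field K] [Fintype K] [AddCommGroup V] [Module K V] [Fintype V]
    (S : Submodule K V) (n : ℕ) : Finset (Submodule K V) :=
  (Set.toFinite {H : Submodule K V | H ≤ S ∧ finrank K H = n}).toFinset

lemma mem_subsF {K V : Type*} [Field K] [Fintype K] [AddCommGroup V] [Module K V] [Fintype V]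
    {S H : Submodule K V} {n : ℕ} : H ∈ subsF S n ↔ H ≤ S ∧ finrank K H = n := by
  simp [subsF]

lemma aux_card_hyp {K V : Type*} [Field K] [Fintype K] [AddCommGroup V] [Module K V] [Fintype V]
    (S : Submodule K V) (n : ℕ) (hS : finrank K S = n + 1) :
    ((subsF S n).card : ℝ) * ((Fintype.card K : ℝ) - 1) = (Fintype.card K : ℝ) ^ (n + 1) - 1 := by
  have : Finite (Dual K S) := Module.finite_of_finite K
  have : Fintype (Dual K S) := Fintype.ofFinite _
  have key : ∀ φ : Dual K S, φ ≠ 0 →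
      finrank K ↥((LinearMap.ker φ).map S.subtype) = n := by
    intro φ hφ
    rw [Submodule.finrank_map_subtype_eq]
    have := Module.Dual.finrank_ker_add_one_of_ne_zero hφ
    omega
  have h1 := Finset.card_eq_sum_card_fiberwise (s := univ.filter (fun φ : Dual K S => φ ≠ 0))
    (t := subsF S n) (f := fun φ => (LinearMap.ker φ).map S.subtype) (by
      intro φ hφ
      have hφ' : φ ≠ 0 := by simpa using hφ
      exact mem_subsF.2 ⟨Submodule.map_subtype_le _ _, key φ hφ'⟩)
  have h2 : ∀ H ∈ subsF S n, (((univ.filter (fun φ : Dual K S => φ ≠ 0)).filter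
      (fun φ => (LinearMap.ker φ).map S.subtype = H)).card : ℝ) = (Fintype.card K : ℝ) - 1 := by
    intro H hH
    obtain ⟨hHS, hHn⟩ := mem_subsF.1 hH
    have hc : finrank K ↥(H.comap S.subtype) = n := by
      rw [← hHn, ← Submodule.finrank_map_subtype_eq, Submodule.map_comap_subtype, inf_eq_right.2 hHS]
    have hA := Subspace.finrank_add_finrank_dualAnnihilator_eq (H.comap S.subtype)
    have hA1 : finrank K ↥(Submodule.dualAnnihilator (H.comap S.subtype)) = 1 := by omega
    have := aux_card_diff (⊥ : Submodule K (Dual K S))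
      (Submodule.dualAnnihilator (H.comap S.subtype)) bot_le
    rw [hA1, finrank_bot, pow_one, pow_zero] at this
    rw [← this, Finset.filter_filter]
    congr 2
    ext φ
    simp only [mem_filter, mem_univ, true_and, Submodule.mem_bot]
    constructor
    · rintro ⟨h0, rfl⟩
      refine ⟨?_, h0⟩
      rw [Submodule.mem_dualAnnihilator]
      intro w hw
      simpa using hw
    · rintro ⟨h0, h3⟩
      refine ⟨h3, ?_⟩
      symm
      apply Submodule.eq_of_le_of_finrank_le
      · intro x hx
        rw [Submodule.mem_dualAnnihilator] at h0
        exact ⟨⟨x, hHS hx⟩, h0 ⟨x, hHS hx⟩ hx, rfl⟩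
      · rw [key φ h3, hHn]
  have h3 := aux_card_diff (⊥ : Submodule K (Dual K S)) ⊤ bot_le
  rw [finrank_top, Subspace.dual_finrank_eq, hS, finrank_bot, pow_zero] at h3
  have h4 : (univ.filter (fun φ : Dual K S => φ ∈ (⊤ : Submodule K (Dual K S)) ∧
      φ ∉ (⊥ : Submodule K (Dual K S)))) = univ.filter (fun φ : Dual K S => φ ≠ 0) := by
    ext φ; simp
  rw [h4, h1] at h3
  push_cast at h3
  rw [Finset.sum_congr rfl h2, Finset.sum_const, nsmul_eq_mul] at h3
  exact h3

/-- finset of `m`-dimensional totally isotropic subspaces -/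
def polF {K V : Type*} [Field K] [Fintype K] [AddCommGroup V] [Module K V] [Fintype V]
    (f : V →ₗ[K] V →ₗ[K] K) (m : ℕ) : Finset (Submodule K V) :=
  (Set.toFinite (polar f m)).toFinset

lemma mem_polF {K V : Type*} [Field K] [Fintype K] [AddCommGroup V] [Module K V] [Fintype V]
    {f : V →ₗ[K] V →ₗ[K] K} {m : ℕ} {F : Submodule K V} :
    F ∈ polF f m ↔ TotallyIsotropic f F ∧ finrank K F = m := by
  simp [polF, polar]

/-- ratio -/
def RR (q : ℝ) (ν m a : ℕ) : ℝ := (q ^ (2 * ν - a) - q ^ a) / (q ^ m - q ^ a)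

/-- number of `m`-dim t.i. subspaces over an `a`-dim one -/
def NN (q : ℝ) (ν a m : ℕ) : ℝ := ∏ i ∈ Finset.Ico a m, RR q ν m i

lemma NN_self (q : ℝ) (ν m : ℕ) : NN q ν m m = 1 := by simp [NN]

lemma NN_rec (q : ℝ) (ν a m : ℕ) (h : a < m) : NN q ν a m = RR q ν m a * NN q ν (a + 1) m := by
  rw [NN, NN, Finset.prod_eq_prod_Ico_succ_bot h]

lemma aux_perp {K V : Type*} [Field K] [AddCommGroup V] [Module K V] [FiniteDimensional K V]
    (f : V →ₗ[K] V →ₗ[K] K) (halt : ∀ x, f x x = 0) (hnd : ∀ x, (∀ y, f x y = 0) → x = 0)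
    (A : Submodule K V) :
    ∃ P : Submodule K V, finrank K P = finrank K V - finrank K A ∧
      ∀ z, z ∈ P ↔ ∀ x ∈ A, f x z = 0 := by
  have hn : LinearMap.BilinForm.Nondegenerate f := by
    refine ⟨hnd, ?_⟩
    intro y hy
    refine hnd y fun x => ?_
    rw [aux_skew halt x y, hy x, neg_zero]
  refine ⟨LinearMap.BilinForm.orthogonal f A, LinearMap.BilinForm.finrank_orthogonal hn A, ?_⟩
  intro z
  rfl

lemma aux_N {K V : Type*} [Field K] [Fintype K] [AddCommGroup V] [Module K V] [Fintype V]
    (f : V →ₗ[K] V →ₗ[K] K) (halt : ∀ x, f x x = 0) (hnd : ∀ x, (∀ y, f x y = 0) → x = 0)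
    (ν m : ℕ) (hV : finrank K V = 2 * ν) :
    ∀ k, ∀ A : Submodule K V, TotallyIsotropic f A → finrank K A + k = m →
      ((upF (polF f m) A).card : ℝ) = NN (Fintype.card K) ν (finrank K A) m := by
  intro k
  induction k with
  | zero =>
    intro A hA hk
    have : upF (polF f m) A = {A} := by
      ext F
      rw [mem_upF, mem_polF, mem_singleton]
      constructor
      · rintro ⟨⟨_, h2⟩, h3⟩
        exact (Submodule.eq_of_le_of_finrank_le h3 (by omega)).symm
      · rintro rfl
        exact ⟨⟨hA, by omega⟩, le_rfl⟩
    rw [this, show finrank K A = m by omega, NN_self]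
    simp
  | succ k ih =>
    intro A hA hk
    obtain ⟨P, hP1, hP2⟩ := aux_perp f halt hnd A
    have hAP : A ≤ P := fun z hz => (hP2 z).2 fun x hx => hA x hx z hz
    have hdc := aux_dc (upF (polF f m) A) A P hAP (fun F hF => (mem_upF.1 hF).2)
    have hl : ∀ z ∈ univ.filter (fun z : V => z ∈ P ∧ z ∉ A),
        ((upF (upF (polF f m) A) (A ⊔ Submodule.span K {z})).card : ℝ)
          = NN (Fintype.card K) ν (finrank K A + 1) m := by
      intro z hz
      simp only [mem_filter, mem_univ, true_and] at hz
      have e : upF (upF (polF f m) A) (A ⊔ Submodule.span K {z})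
          = upF (polF f m) (A ⊔ Submodule.span K {z}) := by
        ext F
        simp only [mem_upF, aux_sup_span_le]
        tauto
      rw [e, ih _ (aux_ti_span halt hA z ((hP2 z).1 hz.1)), aux_fr_span A z hz.2]
      rw [aux_fr_span A z hz.2]; omega
    have hr : ∀ F ∈ upF (polF f m) A, ((Fintype.card K : ℝ) ^ finrank K ↥(F ⊓ P)
          - (Fintype.card K : ℝ) ^ finrank K A)
          = (Fintype.card K : ℝ) ^ m - (Fintype.card K : ℝ) ^ finrank K A := by
      intro F hF
      obtain ⟨h1, h2⟩ := mem_upF.1 hF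
      obtain ⟨h3, h4⟩ := mem_polF.1 h1
      have : F ⊓ P = F := inf_eq_left.2 fun z hz => (hP2 z).2 fun x hx => h3 x (h2 hx) z hz
      rw [this, h4]
    rw [Finset.sum_congr rfl hl, Finset.sum_congr rfl hr, Finset.sum_const, Finset.sum_const,
      nsmul_eq_mul, nsmul_eq_mul, aux_card_diff A P hAP, hP1, hV] at hdc
    have hq : (1:ℝ) < Fintype.card K := by exact_mod_cast Fintype.one_lt_card
    have hpos : (0:ℝ) < (Fintype.card K : ℝ) ^ m - (Fintype.card K : ℝ) ^ finrank K A := by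
      have := pow_lt_pow_right₀ hq (show finrank K A < m by omega)
      linarith
    rw [NN_rec _ _ _ _ (by omega), RR, div_mul_eq_mul_div, eq_div_iff hpos.ne']
    linarith


/-- `[n]_q` -/
def br (q : ℝ) (n : ℕ) : ℝ := (q ^ n - 1) / (q - 1)

lemma aux_stepW {K V : Type*} [Field K] [AddCommGroup V] [Module K V] [FiniteDimensional K V]
    (T G : Submodule K V) (t g : ℕ) (hG : finrank K G = g) (hk : finrank K ↥(T ⊓ G) < t)
    (htg : t ≤ g) :
    ∃ U, U ≤ G ∧ finrank K ↥(T ⊔ U) = finrank K T + (g - t + 1) ∧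
      ∀ F, T ≤ F → t ≤ finrank K ↥(F ⊓ G) → finrank K T + 1 ≤ finrank K ↥(F ⊓ (T ⊔ U)) := by
  obtain ⟨U, hU1, hU2, hU3⟩ := aux_between (T ⊓ G) G inf_le_right
    (finrank K ↥(T ⊓ G) + (g - t + 1)) (by omega) (by omega)
  have e : T ⊓ U = T ⊓ G := le_antisymm (inf_le_inf_left _ hU2) (le_inf inf_le_left hU1)
  refine ⟨U, hU2, ?_, ?_⟩
  · have := Submodule.finrank_sup_add_finrank_inf_eq T U
    rw [e] at this
    omega
  · intro F hTF hF
    have h1 := aux_inf_dim F U G hU2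
    have h2 := Submodule.finrank_sup_add_finrank_inf_eq T (F ⊓ U)
    have h3 : T ⊓ (F ⊓ U) = T ⊓ G := by rw [← inf_assoc, inf_eq_left.2 hTF, e]
    have h4 : finrank K ↥(T ⊔ (F ⊓ U)) ≤ finrank K ↥(F ⊓ (T ⊔ U)) :=
      Submodule.finrank_mono (sup_le (le_inf hTF le_sup_left)
        (le_inf inf_le_left (inf_le_right.trans le_sup_right)))
    rw [h3] at h2
    omega

lemma aux_qone (K : Type*) [Field K] [Fintype K] : (2:ℝ) ≤ Fintype.card K := by
  exact_mod_cast (Fintype.one_lt_card : 1 < Fintype.card K)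

lemma aux_stepsum {K V : Type*} [Field K] [Fintype K] [AddCommGroup V] [Module K V] [Fintype V]
    (Y : Finset (Submodule K V)) (T W : Submodule K V) (hTW : T ≤ W)
    (hW : ∀ F ∈ Y, T ≤ F → finrank K T + 1 ≤ finrank K ↥(F ⊓ W)) :
    ((upF Y T).card : ℝ) * ((Fintype.card K : ℝ) ^ (finrank K T + 1)
        - (Fintype.card K : ℝ) ^ finrank K T)
      ≤ ∑ z ∈ univ.filter (fun z : V => z ∈ W ∧ z ∉ T),
        ((upF Y (T ⊔ Submodule.span K {z})).card : ℝ) := by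
  have h := aux_dc (upF Y T) T W hTW (fun F hF => (mem_upF.1 hF).2)
  have e : ∀ z : V, upF (upF Y T) (T ⊔ Submodule.span K {z}) = upF Y (T ⊔ Submodule.span K {z}) := by
    intro z
    ext F
    simp only [mem_upF, aux_sup_span_le]
    tauto
  simp_rw [e] at h
  rw [h, ← nsmul_eq_mul, ← Finset.sum_const]
  refine Finset.sum_le_sum fun F hF => ?_
  have := hW F (mem_upF.1 hF).1 (mem_upF.1 hF).2
  have := pow_le_pow_right₀ (by linarith [aux_qone K] : (1:ℝ) ≤ Fintype.card K) this
  linarith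

lemma aux_br_div (q : ℝ) (hq : 2 ≤ q) (s n : ℕ) (x B : ℝ)
    (h : x * (q ^ (s + 1) - q ^ s) ≤ (q ^ (s + n) - q ^ s) * B) : x ≤ br q n * B := by
  have hp : 0 < q ^ s := by positivity
  have e1 : q ^ (s+1) - q ^ s = q ^ s * (q - 1) := by ring
  have e2 : q ^ (s+n) - q ^ s = q ^ s * (q ^ n - 1) := by ring
  rw [e1, e2] at h
  rw [br, div_mul_eq_mul_div, le_div_iff₀ (by linarith)]
  have : q ^ s * (x * (q-1)) ≤ q ^ s * ((q^n-1)*B) := by linarith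
  exact le_of_mul_le_mul_left this hp

lemma aux_up_bound {K V : Type*} [Field K] [AddCommGroup V] [Module K V]
    (f : V →ₗ[K] V →ₗ[K] K) (Y : Finset (Submodule K V)) (hY : ∀ F ∈ Y, TotallyIsotropic f F)
    (n : ℕ) (B : ℝ) (hB0 : 0 ≤ B)
    (hB : ∀ S, TotallyIsotropic f S → finrank K S = n → ((upF Y S).card : ℝ) ≤ B)
    (S : Submodule K V) (hS : finrank K S = n) : ((upF Y S).card : ℝ) ≤ B := by
  by_cases h : (upF Y S).Nonempty
  · obtain ⟨F, hF⟩ := h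
    rw [mem_upF] at hF
    exact hB S (aux_ti_mono hF.2 (hY F hF.1)) hS
  · rw [Finset.not_nonempty_iff_eq_empty] at h
    simp [h, hB0]

lemma aux_step {K V : Type*} [Field K] [Fintype K] [AddCommGroup V] [Module K V] [Fintype V]
    (f : V →ₗ[K] V →ₗ[K] K) (Y : Finset (Submodule K V)) (hY : ∀ F ∈ Y, TotallyIsotropic f F)
    (T G : Submodule K V) (t g : ℕ) (hG : finrank K G = g) (hk : finrank K ↥(T ⊓ G) < t)
    (htg : t ≤ g) (hc : ∀ F ∈ Y, t ≤ finrank K ↥(F ⊓ G)) (B : ℝ) (hB0 : 0 ≤ B)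
    (hB : ∀ S, TotallyIsotropic f S → finrank K S = finrank K T + 1 → ((upF Y S).card : ℝ) ≤ B) :
    ((upF Y T).card : ℝ) ≤ br (Fintype.card K) (g - t + 1) * B := by
  obtain ⟨U, hU1, hU2, hU3⟩ := aux_stepW T G t g hG hk htg
  have h := aux_stepsum Y T (T ⊔ U) le_sup_left (fun F hF hTF => hU3 F hTF (hc F hF))
  have h2 : ∑ z ∈ univ.filter (fun z : V => z ∈ T ⊔ U ∧ z ∉ T),
        ((upF Y (T ⊔ Submodule.span K {z})).card : ℝ)
      ≤ ∑ z ∈ univ.filter (fun z : V => z ∈ T ⊔ U ∧ z ∉ T), B := by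
    refine Finset.sum_le_sum fun z hz => ?_
    simp only [mem_filter, mem_univ, true_and] at hz
    exact aux_up_bound f Y hY _ B hB0 hB _ (aux_fr_span T z hz.2)
  rw [Finset.sum_const, nsmul_eq_mul, aux_card_diff _ _ le_sup_left, hU2] at h2
  exact aux_br_div _ (aux_qone K) _ _ _ _ (h.trans h2)

lemma br_nonneg (q : ℝ) (hq : 2 ≤ q) (n : ℕ) : 0 ≤ br q n := by
  have := one_le_pow₀ (by linarith : (1:ℝ) ≤ q) (n := n)
  exact div_nonneg (by linarith) (by linarith)

lemma aux_iter {K V : Type*} [Field K] [Fintype K] [AddCommGroup V] [Module K V] [Fintype V]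
    (f : V →ₗ[K] V →ₗ[K] K) (Y X : Finset (Submodule K V)) (hY : ∀ F ∈ Y, TotallyIsotropic f F)
    (t g τ : ℕ) (hX : ∀ G ∈ X, finrank K G = g) (htg : t ≤ g)
    (hc : ∀ F ∈ Y, ∀ G ∈ X, t ≤ finrank K ↥(F ⊓ G))
    (hτ : ∀ Z, TotallyIsotropic f Z → finrank K Z < τ → ∃ G ∈ X, finrank K ↥(Z ⊓ G) < t)
    (B : ℝ) (hB0 : 0 ≤ B)
    (hB : ∀ S, TotallyIsotropic f S → finrank K S = τ → ((upF Y S).card : ℝ) ≤ B) :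
    ∀ k, ∀ T, TotallyIsotropic f T → finrank K T + k = τ →
      ((upF Y T).card : ℝ) ≤ br (Fintype.card K) (g - t + 1) ^ k * B := by
  intro k
  induction k with
  | zero => intro T hT hk; simpa using hB T hT (by omega)
  | succ k ih =>
    intro T hT hk
    obtain ⟨G, hG, hG2⟩ := hτ T hT (by omega)
    have := aux_step f Y hY T G t g (hX G hG) hG2 htg (fun F hF => hc F hF G hG)
      (br (Fintype.card K) (g - t + 1) ^ k * B)
      (mul_nonneg (pow_nonneg (br_nonneg _ (aux_qone K) _) _) hB0)
      (fun S hS hS2 => ih S hS (by omega))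
    rw [pow_succ']
    linarith

/-- crude bound via a cover of dimension `t+i` -/
lemma aux_cover {K V : Type*} [Field K] [Fintype K] [AddCommGroup V] [Module K V] [Fintype V]
    (f : V →ₗ[K] V →ₗ[K] K) (Y : Finset (Submodule K V)) (hY : ∀ F ∈ Y, TotallyIsotropic f F)
    (t i : ℕ) (Z : Submodule K V) (hZ : finrank K Z = t + i)
    (hc : ∀ F ∈ Y, t ≤ finrank K ↥(F ⊓ Z)) (B : ℝ) (hB0 : 0 ≤ B)
    (hB : ∀ S, TotallyIsotropic f S → finrank K S = t → ((upF Y S).card : ℝ) ≤ B) :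
    (Y.card : ℝ) ≤ br (Fintype.card K) (i + 1) ^ t * B := by
  have h := aux_iter f Y {Z} hY t (t + i) t (by simpa using hZ) (by omega) (by simpa using hc)
    (by
      intro Z' _ h2
      refine ⟨Z, by simp, ?_⟩
      exact lt_of_le_of_lt (Submodule.finrank_mono inf_le_left) h2) B hB0 hB t ⊥
    (by intro x hx y hy; simp [(Submodule.mem_bot K).1 hx]) (by simp)
  have e : upF Y ⊥ = Y := by ext F; simp [mem_upF]
  rw [e, show t + i - t + 1 = i + 1 by omega] at h
  exact h

lemma aux_hyp_card {K V : Type*} [Field K] [Fintype K] [AddCommGroup V] [Module K V] [Fintype V]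
    (S : Submodule K V) (n : ℕ) (hS : finrank K S = n + 1) :
    ((subsF S n).card : ℝ) = br (Fintype.card K) (n + 1) := by
  have h := aux_card_hyp S n hS
  have := aux_qone K
  rw [br, eq_div_iff (by linarith), h]

/-- sum over hyperplanes -/
lemma aux_hyp_sum {K V : Type*} [Field K] [Fintype K] [AddCommGroup V] [Module K V] [Fintype V]
    (Y : Finset (Submodule K V)) (t : ℕ) (Z : Submodule K V)
    (hc : ∀ F ∈ Y, t ≤ finrank K ↥(F ⊓ Z)) :
    (Y.card : ℝ) ≤ ∑ H ∈ subsF Z t, ((upF Y H).card : ℝ) := by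
  have h : Y ⊆ (subsF Z t).biUnion (fun H => upF Y H) := by
    intro F hF
    obtain ⟨H, _, hH2, hH3⟩ := aux_between ⊥ (F ⊓ Z) bot_le t (by simp) (hc F hF)
    exact mem_biUnion.2 ⟨H, mem_subsF.2 ⟨hH2.trans inf_le_right, hH3⟩,
      mem_upF.2 ⟨hF, hH2.trans inf_le_left⟩⟩
  have h2 := (card_le_card h).trans card_biUnion_le
  exact_mod_cast h2

/-- generic `g(i)` -/
def gg (q : ℝ) (t i : ℕ) : ℝ := if i = 1 then br q (t + 1) else br q (i + 1) ^ t

lemma aux_cover_gg {K V : Type*} [Field K] [Fintype K] [AddCommGroup V] [Module K V] [Fintype V]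
    (f : V →ₗ[K] V →ₗ[K] K) (Y : Finset (Submodule K V)) (hY : ∀ F ∈ Y, TotallyIsotropic f F)
    (t i : ℕ) (Z : Submodule K V) (hZ : finrank K Z = t + i)
    (hc : ∀ F ∈ Y, t ≤ finrank K ↥(F ⊓ Z)) (B : ℝ) (hB0 : 0 ≤ B)
    (hB : ∀ S, TotallyIsotropic f S → finrank K S = t → ((upF Y S).card : ℝ) ≤ B) :
    (Y.card : ℝ) ≤ gg (Fintype.card K) t i * B := by
  rw [gg]
  split_ifs with h
  · subst h
    refine (aux_hyp_sum Y t Z hc).trans ?_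
    rw [← aux_hyp_card Z t hZ, ← nsmul_eq_mul, ← Finset.sum_const]
    refine Finset.sum_le_sum fun H hH => ?_
    exact aux_up_bound f Y hY t B hB0 hB H (mem_subsF.1 hH).2
  · exact aux_cover f Y hY t i Z hZ hc B hB0 hB


lemma NN_nonneg (q : ℝ) (hq : 2 ≤ q) (ν a m : ℕ) (hm : m ≤ ν) : 0 ≤ NN q ν a m := by
  refine Finset.prod_nonneg fun i hi => ?_
  rw [Finset.mem_Ico] at hi
  have h1 := pow_le_pow_right₀ (by linarith : (1:ℝ) ≤ q) (show i ≤ m by omega)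
  have h2 := pow_le_pow_right₀ (by linarith : (1:ℝ) ≤ q) (show i ≤ 2 * ν - i by omega)
  exact div_nonneg (by linarith) (by linarith)

/-- the standing data -/
structure Ctx {K V : Type*} [Field K] [Fintype K] [AddCommGroup V] [Module K V] [Fintype V]
    (f : V →ₗ[K] V →ₗ[K] K) (ν : ℕ) : Prop where
  halt : ∀ x, f x x = 0
  hnd : ∀ x, (∀ y, f x y = 0) → x = 0
  hV : finrank K V = 2 * ν

lemma Ctx.card {K V : Type*} [Field K] [Fintype K] [AddCommGroup V] [Module K V] [Fintype V]
    {f : V →ₗ[K] V →ₗ[K] K} {ν : ℕ} (c : Ctx f ν) {A : Submodule K V} (hA : TotallyIsotropic f A)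
    {a m : ℕ} (ha : finrank K A = a) (ham : a ≤ m) :
    ((upF (polF f m) A).card : ℝ) = NN (Fintype.card K) ν a m := by
  rw [aux_N f c.halt c.hnd ν m c.hV (m - a) A hA (by omega), ha]

lemma Ctx.up_le {K V : Type*} [Field K] [Fintype K] [AddCommGroup V] [Module K V] [Fintype V]
    {f : V →ₗ[K] V →ₗ[K] K} {ν : ℕ} (c : Ctx f ν) {A : Submodule K V} (hA : TotallyIsotropic f A)
    {a m : ℕ} (ha : finrank K A = a) (ham : a ≤ m) {Y : Finset (Submodule K V)}
    (hY : ∀ F ∈ Y, F ∈ polF f m) :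
    ((upF Y A).card : ℝ) ≤ NN (Fintype.card K) ν a m := by
  rw [← c.card hA ha ham]
  exact_mod_cast card_le_card (fun F hF => by
    rw [mem_upF] at hF ⊢
    exact ⟨hY F hF.1, hF.2⟩)

lemma aux_not_le {K V : Type*} [Field K] [AddCommGroup V] [Module K V] [FiniteDimensional K V]
    (T G : Submodule K V) (h : ¬ T ≤ G) : finrank K ↥(T ⊓ G) < finrank K T := by
  refine Submodule.finrank_lt_finrank_of_lt (lt_of_le_of_ne inf_le_left ?_)
  intro h2
  exact h (inf_eq_left.1 h2)

lemma Ctx.B {K V : Type*} [Field K] [Fintype K] [AddCommGroup V] [Module K V] [Fintype V]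
    {f : V →ₗ[K] V →ₗ[K] K} {ν : ℕ} (c : Ctx f ν) {Y X : Finset (Submodule K V)} {my mx t s : ℕ}
    (hY : ∀ F ∈ Y, F ∈ polF f my) (hX : ∀ F ∈ X, F ∈ polF f mx)
    (hc : ∀ F ∈ Y, ∀ G ∈ X, t ≤ finrank K ↥(F ⊓ G)) (hsy : s + 1 ≤ my) (htx : t ≤ mx)
    (hy : my ≤ ν)
    {T : Submodule K V} (hT2 : finrank K T = s) {G : Submodule K V}
    (hG : G ∈ X) (hTG : finrank K ↥(T ⊓ G) < t) :
    ((upF Y T).card : ℝ) ≤ br (Fintype.card K) (mx - t + 1) * NN (Fintype.card K) ν (s + 1) my := by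
  refine aux_step f Y (fun F hF => (mem_polF.1 (hY F hF)).1) T G t mx (mem_polF.1 (hX G hG)).2
    hTG htx (fun F hF => hc F hF G hG) _
    (NN_nonneg _ (aux_qone K) _ _ _ hy) ?_
  intro S hS hS2
  exact c.up_le hS (by omega) hsy hY

lemma Ctx.D {K V : Type*} [Field K] [Fintype K] [AddCommGroup V] [Module K V] [Fintype V]
    {f : V →ₗ[K] V →ₗ[K] K} {ν : ℕ} (c : Ctx f ν) {Y X : Finset (Submodule K V)} {my mx t : ℕ}
    (hY : ∀ F ∈ Y, F ∈ polF f my) (hX : ∀ F ∈ X, F ∈ polF f mx)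
    (hc : ∀ F ∈ Y, ∀ G ∈ X, t ≤ finrank K ↥(F ⊓ G)) (hty : t + 1 ≤ my) (htx : t + 1 ≤ mx)
    (hx : mx ≤ ν)
    {S : Submodule K V} (hS : TotallyIsotropic f S) (hS2 : finrank K S = t + 1)
    (hcov : ∀ G ∈ X, t ≤ finrank K ↥(G ⊓ S)) (hnot : ¬ ∀ F ∈ Y, S ≤ F) :
    (X.card : ℝ) ≤ NN (Fintype.card K) ν t mx +
      br (Fintype.card K) (t + 1) *
        (br (Fintype.card K) (my - t + 1) * NN (Fintype.card K) ν (t + 1) mx) := by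
  have hq := aux_qone K
  set β := br (Fintype.card K) (my - t + 1) * NN (Fintype.card K) ν (t + 1) mx with hβ
  have hβ0 : 0 ≤ β := mul_nonneg (br_nonneg _ hq _) (NN_nonneg _ hq _ _ _ hx)
  have hN0 : 0 ≤ NN (Fintype.card K) ν t mx := NN_nonneg _ hq _ _ _ hx
  have hsum := aux_hyp_sum X t S hcov
  have hnc : ∀ H ∈ subsF S t, (¬ ∀ F ∈ Y, H ≤ F) → ((upF X H).card : ℝ) ≤ β := by
    intro H hH hn
    push Not at hn
    obtain ⟨F, hF, hHF⟩ := hn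
    have hH := mem_subsF.1 hH
    refine c.B hX hY (fun G hG F hF => by rw [inf_comm]; exact hc F hF G hG) htx (by omega) hx
      hH.2 hF (by have := aux_not_le H F hHF; omega)
  rw [← aux_hyp_card S t hS2]
  by_cases hcore : ∃ H0 ∈ subsF S t, ∀ F ∈ Y, H0 ≤ F
  · obtain ⟨H0, hH0, hc0⟩ := hcore
    have hother : ∀ H ∈ (subsF S t).erase H0, ((upF X H).card : ℝ) ≤ β := by
      intro H hH
      obtain ⟨hne, hH⟩ := mem_erase.1 hH
      refine hnc H hH fun hcH => hnot fun F hF => ?_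
      have h0 := mem_subsF.1 hH0
      have h1 := mem_subsF.1 hH
      have hle : H ⊔ H0 ≤ F := sup_le (hcH F hF) (hc0 F hF)
      refine le_trans (le_of_eq ?_) hle
      symm
      refine Submodule.eq_of_le_of_finrank_le (sup_le h1.1 h0.1) ?_
      have hlt : H0 < H ⊔ H0 := by
        refine lt_of_le_of_ne le_sup_right fun e => hne ?_
        have hle2 : H ≤ H0 := by rw [e]; exact le_sup_left
        exact Submodule.eq_of_le_of_finrank_le hle2 (by omega)
      have := Submodule.finrank_lt_finrank_of_lt hlt
      omega
    rw [← Finset.add_sum_erase _ _ hH0] at hsum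
    have h1 : ((upF X H0).card : ℝ) ≤ NN (Fintype.card K) ν t mx :=
      c.up_le (aux_ti_mono (mem_subsF.1 hH0).1 hS) (mem_subsF.1 hH0).2 (by omega) hX
    have h2 := Finset.sum_le_sum hother
    rw [Finset.sum_const, nsmul_eq_mul] at h2
    have h3 : (((subsF S t).erase H0).card : ℝ) * β ≤ ((subsF S t).card : ℝ) * β := by
      refine mul_le_mul_of_nonneg_right ?_ hβ0
      exact_mod_cast card_le_card (erase_subset _ _)
    linarith
  · push Not at hcore
    have h2 := Finset.sum_le_sum (fun H hH => hnc H hH (fun hh => by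
      obtain ⟨F, hF, hn⟩ := hcore H hH
      exact hn (hh F hF)))
    rw [Finset.sum_const, nsmul_eq_mul] at h2
    linarith

lemma aux_tau {K V : Type*} [Field K] [Fintype K] [AddCommGroup V] [Module K V] [Fintype V]
    {f : V →ₗ[K] V →ₗ[K] K} {Y X : Finset (Submodule K V)} {my t : ℕ}
    (hY : ∀ F ∈ Y, F ∈ polF f my)
    (hc : ∀ F ∈ Y, ∀ G ∈ X, t ≤ finrank K ↥(F ⊓ G)) (hYn : Y.Nonempty) (hXn : X.Nonempty) :
    ∃ j Z, t + j ≤ my ∧ TotallyIsotropic f Z ∧ finrank K Z = t + j ∧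
      (∀ G ∈ X, t ≤ finrank K ↥(G ⊓ Z)) ∧
      ∀ Z', TotallyIsotropic f Z' → finrank K Z' < t + j → ∃ G ∈ X, finrank K ↥(Z' ⊓ G) < t := by
  have hex : ∃ n, ∃ Z, TotallyIsotropic f Z ∧ finrank K Z = n ∧
      (∀ G ∈ X, t ≤ finrank K ↥(G ⊓ Z)) := by
    obtain ⟨F, hF⟩ := hYn
    exact ⟨finrank K F, F, (mem_polF.1 (hY F hF)).1, rfl, fun G hG => by
      rw [inf_comm]; exact hc F hF G hG⟩
  obtain ⟨Z, hZ1, hZ2, hZ3⟩ := Nat.find_spec hex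
  have hge : t ≤ Nat.find hex := by
    obtain ⟨G, hG⟩ := hXn
    rw [← hZ2]
    exact (hZ3 G hG).trans (Submodule.finrank_mono inf_le_right)
  have hle : Nat.find hex ≤ my := by
    obtain ⟨F, hF⟩ := hYn
    exact Nat.find_min' hex ⟨F, (mem_polF.1 (hY F hF)).1, (mem_polF.1 (hY F hF)).2, fun G hG => by
      rw [inf_comm]; exact hc F hF G hG⟩
  refine ⟨Nat.find hex - t, Z, by omega, hZ1, by omega, hZ3, ?_⟩
  intro Z' h1 h2
  have := Nat.find_min hex (m := finrank K Z') (by omega)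
  push Not at this
  obtain ⟨G, hG, h⟩ := this Z' h1 rfl
  exact ⟨G, hG, by rw [inf_comm]; exact h⟩

lemma Ctx.gen {K V : Type*} [Field K] [Fintype K] [AddCommGroup V] [Module K V] [Fintype V]
    {f : V →ₗ[K] V →ₗ[K] K} {ν : ℕ} (c : Ctx f ν) {Y X : Finset (Submodule K V)}
    {my mx t i j : ℕ}
    (hY : ∀ F ∈ Y, F ∈ polF f my) (hX : ∀ F ∈ X, F ∈ polF f mx)
    (hc : ∀ F ∈ Y, ∀ G ∈ X, t ≤ finrank K ↥(F ⊓ G)) (htx : t ≤ mx) (hy : my ≤ ν)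
    (hi : t + i ≤ my)
    (hτ : ∀ Z', TotallyIsotropic f Z' → finrank K Z' < t + i → ∃ G ∈ X, finrank K ↥(Z' ⊓ G) < t)
    {Z : Submodule K V} (hZ : finrank K Z = t + j) (hcov : ∀ F ∈ Y, t ≤ finrank K ↥(F ⊓ Z)) :
    (Y.card : ℝ) ≤ gg (Fintype.card K) t j *
      (br (Fintype.card K) (mx - t + 1) ^ i * NN (Fintype.card K) ν (t + i) my) := by
  have hq := aux_qone K
  have hN0 : 0 ≤ NN (Fintype.card K) ν (t + i) my := NN_nonneg _ hq _ _ _ hy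
  have hYt : ∀ F ∈ Y, TotallyIsotropic f F := fun F hF => (mem_polF.1 (hY F hF)).1
  refine aux_cover_gg f Y hYt t j Z hZ hcov _
    (mul_nonneg (pow_nonneg (br_nonneg _ hq _) _) hN0) ?_
  intro T hT hT2
  exact aux_iter f Y X hYt t mx (t + i) (fun G hG => (mem_polF.1 (hX G hG)).2) htx hc hτ _ hN0
    (fun S hS hS2 => c.up_le hS hS2 hi hY) i T hT (by omega)

lemma Ctx.C4card {K V : Type*} [Field K] [Fintype K] [AddCommGroup V] [Module K V] [Fintype V]
    {f : V →ₗ[K] V →ₗ[K] K} {ν : ℕ} (c : Ctx f ν) {m t : ℕ} (htm : t + 1 ≤ m)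
    {S : Submodule K V} (hS : TotallyIsotropic f S) (hS2 : finrank K S = t + 1) :
    (((polF f m).filter (fun F => t ≤ finrank K ↥(F ⊓ S))).card : ℝ)
      = br (Fintype.card K) (t + 1) * NN (Fintype.card K) ν t m
        - (br (Fintype.card K) (t + 1) - 1) * NN (Fintype.card K) ν (t + 1) m := by
  have h1 : ∑ H ∈ subsF S t, ((upF (polF f m) H).card : ℝ)
      = br (Fintype.card K) (t + 1) * NN (Fintype.card K) ν t m := by
    rw [← aux_hyp_card S t hS2, ← nsmul_eq_mul, ← Finset.sum_const]
    refine Finset.sum_congr rfl fun H hH => ?_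
    have hH := mem_subsF.1 hH
    exact c.card (aux_ti_mono hH.1 hS) hH.2 (by omega)
  have h2 : ∑ H ∈ subsF S t, ((upF (polF f m) H).card : ℝ)
      = ∑ F ∈ polF f m, ((if t ≤ finrank K ↥(F ⊓ S) then (1:ℝ) else 0)
        + (if S ≤ F then (br (Fintype.card K) (t + 1) - 1) else 0)) := by
    have e : ∀ H, ((upF (polF f m) H).card : ℝ) = ∑ F ∈ polF f m, if H ≤ F then (1:ℝ) else 0 := by
      intro H; rw [upF, Finset.sum_boole]
    simp_rw [e]
    rw [Finset.sum_comm]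
    refine Finset.sum_congr rfl fun F hF => ?_
    rw [Finset.sum_boole]
    by_cases hSF : S ≤ F
    · have hall : (subsF S t).filter (fun H => H ≤ F) = subsF S t :=
        Finset.filter_true_of_mem fun H hH => (mem_subsF.1 hH).1.trans hSF
      rw [hall, aux_hyp_card S t hS2, if_pos hSF, if_pos]
      · ring
      · rw [inf_eq_right.2 hSF]; omega
    · have hlt := aux_not_le S F hSF
      rw [inf_comm] at hlt
      rw [if_neg hSF, add_zero]
      split_ifs with ht
      · have : (subsF S t).filter (fun H => H ≤ F) = {F ⊓ S} := by
          ext H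
          rw [mem_filter, mem_subsF, mem_singleton]
          constructor
          · rintro ⟨⟨h1, h2⟩, h3⟩
            exact Submodule.eq_of_le_of_finrank_le (le_inf h3 h1) (by omega)
          · rintro rfl
            exact ⟨⟨inf_le_right, by omega⟩, inf_le_left⟩
        rw [this]; simp
      · have : (subsF S t).filter (fun H => H ≤ F) = ∅ := by
          rw [Finset.filter_eq_empty_iff]
          intro H hH h3
          obtain ⟨h1, h2⟩ := mem_subsF.1 hH
          have := Submodule.finrank_mono (le_inf h3 h1)
          omega
        rw [this]; simp
  rw [Finset.sum_add_distrib, Finset.sum_boole, ← Finset.sum_filter, Finset.sum_const,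
    nsmul_eq_mul] at h2
  have h3 := c.card hS hS2 htm
  rw [upF] at h3
  rw [h3] at h2
  linarith

lemma aux_span_eq {K V : Type*} [Field K] [AddCommGroup V] [Module K V] [FiniteDimensional K V]
    (T : Submodule K V) (z0 z : V) (hz0 : z0 ∉ T) (hz : z ∈ T ⊔ Submodule.span K {z0})
    (hzT : z ∉ T) : T ⊔ Submodule.span K {z} = T ⊔ Submodule.span K {z0} := by
  refine Submodule.eq_of_le_of_finrank_le ((aux_sup_span_le _ _ _).2 ⟨le_sup_left, hz⟩) ?_
  rw [aux_fr_span _ _ hz0, aux_fr_span _ _ hzT]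


lemma aux_br_div_eq (q : ℝ) (hq : 2 ≤ q) (t : ℕ) :
    q ^ (t + (t + 1)) - q ^ t = br q (t + 1) * (q ^ (t + 1) - q ^ t) ∧
    q ^ (t + (t + 1)) - q ^ (t + 1) = (br q (t + 1) - 1) * (q ^ (t + 1) - q ^ t) := by
  have h : q - 1 ≠ 0 := by linarith
  have e : br q (t+1) * (q - 1) = q ^ (t+1) - 1 := by rw [br]; field_simp
  constructor
  · have : br q (t + 1) * (q ^ (t + 1) - q ^ t) = (br q (t+1) * (q - 1)) * q ^ t := by ring
    rw [this, e]; ring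
  · have : (br q (t + 1) - 1) * (q ^ (t + 1) - q ^ t)
        = (br q (t+1) * (q - 1)) * q ^ t - (q ^ (t+1) - q ^ t) := by ring
    rw [this, e]; ring

lemma Ctx.fine_beta {K V : Type*} [Field K] [Fintype K] [AddCommGroup V] [Module K V] [Fintype V]
    {f : V →ₗ[K] V →ₗ[K] K} {ν : ℕ} (c : Ctx f ν) {Y X : Finset (Submodule K V)} {my t : ℕ}
    (hY : ∀ F ∈ Y, F ∈ polF f my) (hX : ∀ F ∈ X, F ∈ polF f (2 * t))
    (hc : ∀ F ∈ Y, ∀ G ∈ X, t ≤ finrank K ↥(F ⊓ G)) (hty : t + 2 ≤ my) (hy : my ≤ ν)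
    {T : Submodule K V} (hT2 : finrank K T = t)
    (hTY : ∀ F ∈ Y, T ≤ F) {W : Submodule K V} (hTW : T ≤ W)
    (hW2 : finrank K W = t + (t + 1))
    (hW : ∀ F ∈ Y, T ≤ F → finrank K T + 1 ≤ finrank K ↥(F ⊓ W))
    {z0 : V} (hz0 : z0 ∈ W) (hz0T : z0 ∉ T)
    (hbad : ¬ (TotallyIsotropic f (T ⊔ Submodule.span K {z0}) ∧
      ∀ G ∈ X, t ≤ finrank K ↥((T ⊔ Submodule.span K {z0}) ⊓ G))) :
    (Y.card : ℝ) ≤ (br (Fintype.card K) (t + 1) - 1) * NN (Fintype.card K) ν (t + 1) my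
      + br (Fintype.card K) (t + 1) * NN (Fintype.card K) ν (t + 2) my := by
  have hq := aux_qone K
  set S0 := T ⊔ Submodule.span K {z0} with hS0
  have hS0d : finrank K S0 = t + 1 := by rw [hS0, aux_fr_span T z0 hz0T, hT2]
  have hS0W : S0 ≤ W := (aux_sup_span_le _ _ _).2 ⟨hTW, hz0⟩
  have hN1 : 0 ≤ NN (Fintype.card K) ν (t + 1) my := NN_nonneg _ hq _ _ _ hy
  have hN2 : 0 ≤ br (Fintype.card K) (t + 1) * NN (Fintype.card K) ν (t + 2) my :=
    mul_nonneg (br_nonneg _ hq _) (NN_nonneg _ hq _ _ _ hy)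
  have hb : ((upF Y S0).card : ℝ) ≤
      br (Fintype.card K) (t + 1) * NN (Fintype.card K) ν (t + 2) my := by
    by_cases hne : (upF Y S0).Nonempty
    · obtain ⟨F, hF⟩ := hne
      rw [mem_upF] at hF
      have hti := aux_ti_mono hF.2 (mem_polF.1 (hY F hF.1)).1
      have : ∃ G ∈ X, finrank K ↥(S0 ⊓ G) < t := by
        by_contra hcon
        push Not at hcon
        exact hbad ⟨hti, hcon⟩
      obtain ⟨G, hG, hG2⟩ := this
      have := c.B hY hX hc (s := t + 1) (by omega) (by omega) hy hS0d hG hG2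
      rwa [show 2 * t - t + 1 = t + 1 by omega] at this
    · rw [Finset.not_nonempty_iff_eq_empty] at hne
      simpa [hne] using hN2
  have hYT : upF Y T = Y := by
    ext F; rw [mem_upF]; exact ⟨fun h => h.1, fun h => ⟨h, hTY F h⟩⟩
  have hs := aux_stepsum Y T W hTW hW
  rw [hYT, hT2] at hs
  have hsplit : univ.filter (fun z : V => z ∈ W ∧ z ∉ T)
      = univ.filter (fun z : V => z ∈ S0 ∧ z ∉ T) ∪ univ.filter (fun z : V => z ∈ W ∧ z ∉ S0) := by
    ext z
    simp only [mem_filter, mem_univ, true_and, mem_union]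
    have h1 : T ≤ S0 := le_sup_left
    constructor
    · rintro ⟨ha, hb⟩
      by_cases h : z ∈ S0
      · exact Or.inl ⟨h, hb⟩
      · exact Or.inr ⟨ha, h⟩
    · rintro (⟨ha, hb⟩ | ⟨ha, hb⟩)
      · exact ⟨hS0W ha, hb⟩
      · exact ⟨ha, fun h => hb (h1 h)⟩
  have hdisj : Disjoint (univ.filter (fun z : V => z ∈ S0 ∧ z ∉ T))
      (univ.filter (fun z : V => z ∈ W ∧ z ∉ S0)) := by
    rw [Finset.disjoint_filter]
    rintro z _ ⟨h1, _⟩ ⟨_, h2⟩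
    exact h2 h1
  rw [hsplit, Finset.sum_union hdisj] at hs
  have h1 : ∑ z ∈ univ.filter (fun z : V => z ∈ S0 ∧ z ∉ T),
      ((upF Y (T ⊔ Submodule.span K {z})).card : ℝ)
      ≤ ∑ z ∈ univ.filter (fun z : V => z ∈ S0 ∧ z ∉ T),
        (br (Fintype.card K) (t + 1) * NN (Fintype.card K) ν (t + 2) my) := by
    refine Finset.sum_le_sum fun z hz => ?_
    simp only [mem_filter, mem_univ, true_and] at hz
    rw [aux_span_eq T z0 z hz0T hz.1 hz.2]
    exact hb
  have h2 : ∑ z ∈ univ.filter (fun z : V => z ∈ W ∧ z ∉ S0),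
      ((upF Y (T ⊔ Submodule.span K {z})).card : ℝ)
      ≤ ∑ z ∈ univ.filter (fun z : V => z ∈ W ∧ z ∉ S0),
        NN (Fintype.card K) ν (t + 1) my := by
    refine Finset.sum_le_sum fun z hz => ?_
    simp only [mem_filter, mem_univ, true_and] at hz
    have hzT : z ∉ T := fun h => hz.2 ((le_sup_left : T ≤ S0) h)
    exact aux_up_bound f Y (fun F hF => (mem_polF.1 (hY F hF)).1) (t + 1) _ hN1
      (fun S hS hS2 => c.up_le hS hS2 (by omega) hY) _ (by rw [aux_fr_span T z hzT, hT2])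
  rw [Finset.sum_const, nsmul_eq_mul, aux_card_diff T S0 le_sup_left, hS0d, hT2] at h1
  rw [Finset.sum_const, nsmul_eq_mul, aux_card_diff S0 W hS0W, hS0d, hW2,
    (aux_br_div_eq _ hq t).2] at h2
  have hpos : 0 < (Fintype.card K : ℝ) ^ (t + 1) - (Fintype.card K : ℝ) ^ t := by
    have := pow_lt_pow_right₀ (by linarith : (1:ℝ) < Fintype.card K) (show t < t + 1 by omega)
    linarith
  refine le_of_mul_le_mul_right ?_ hpos
  linarith

lemma Ctx.fine_alpha_Y {K V : Type*} [Field K] [Fintype K] [AddCommGroup V] [Module K V]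
    [Fintype V]
    {f : V →ₗ[K] V →ₗ[K] K} {ν : ℕ} (c : Ctx f ν) {Y : Finset (Submodule K V)} {my t : ℕ}
    (hY : ∀ F ∈ Y, F ∈ polF f my) (hty : t + 2 ≤ my)
    {T : Submodule K V} (hT2 : finrank K T = t)
    (hTY : ∀ F ∈ Y, T ≤ F) {W : Submodule K V} (hTW : T ≤ W) (hWti : TotallyIsotropic f W)
    (hW2 : finrank K W = t + (t + 1))
    (hW : ∀ F ∈ Y, T ≤ F → finrank K T + 1 ≤ finrank K ↥(F ⊓ W))
    {z0 : V} (hz0 : z0 ∈ W) (hz0T : z0 ∉ T) :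
    (Y.card : ℝ) ≤ br (Fintype.card K) (t + 1) * NN (Fintype.card K) ν (t + 1) my
      - (br (Fintype.card K) (t + 1) - 1) * NN (Fintype.card K) ν (t + 2) my := by
  have hq := aux_qone K
  set S0 := T ⊔ Submodule.span K {z0} with hS0
  have hS0d : finrank K S0 = t + 1 := by rw [hS0, aux_fr_span T z0 hz0T, hT2]
  have hS0W : S0 ≤ W := (aux_sup_span_le _ _ _).2 ⟨hTW, hz0⟩
  have hTS0 : T ≤ S0 := le_sup_left
  have general : ∀ (A : Submodule K V) (a : ℕ), A ≤ W → finrank K A = a → a + 1 ≤ my →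
      ((Fintype.card K : ℝ) ^ finrank K W - (Fintype.card K : ℝ) ^ a)
        * NN (Fintype.card K) ν (a + 1) my
      = ∑ F ∈ upF (polF f my) A, ((Fintype.card K : ℝ) ^ finrank K ↥(F ⊓ W)
          - (Fintype.card K : ℝ) ^ a) := by
    intro A a hAW hA ha
    have h := aux_dc (upF (polF f my) A) A W hAW (fun F hF => (mem_upF.1 hF).2)
    rw [hA] at h
    rw [← h, ← hA, ← aux_card_diff A W hAW, ← nsmul_eq_mul, ← Finset.sum_const]
    refine Finset.sum_congr rfl fun z hz => ?_
    simp only [mem_filter, mem_univ, true_and] at hz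
    have e : upF (upF (polF f my) A) (A ⊔ Submodule.span K {z})
          = upF (polF f my) (A ⊔ Submodule.span K {z}) := by
      ext F
      simp only [mem_upF, aux_sup_span_le]
      tauto
    rw [e, c.card (aux_ti_mono ((aux_sup_span_le _ _ _).2 ⟨hAW, hz.1⟩) hWti)
      (aux_fr_span A z hz.2) (by omega)]
  have g1 := general T t hTW hT2 (by omega)
  have g2 := general S0 (t + 1) hS0W hS0d (by omega)
  have hq1 : (1:ℝ) ≤ Fintype.card K := by linarith
  have key : (Y.card : ℝ) * ((Fintype.card K : ℝ) ^ (t+1) - (Fintype.card K : ℝ) ^ t)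
      + ∑ F ∈ upF (polF f my) S0, ((Fintype.card K : ℝ) ^ finrank K ↥(F ⊓ W)
          - (Fintype.card K : ℝ) ^ (t+1))
      ≤ ∑ F ∈ upF (polF f my) T, ((Fintype.card K : ℝ) ^ finrank K ↥(F ⊓ W)
          - (Fintype.card K : ℝ) ^ t) := by
    have hsub1 : Y ⊆ upF (polF f my) T := fun F hF => mem_upF.2 ⟨hY F hF, hTY F hF⟩
    have hsub2 : upF (polF f my) S0 ⊆ upF (polF f my) T := fun F hF =>
      mem_upF.2 ⟨(mem_upF.1 hF).1, hTS0.trans (mem_upF.1 hF).2⟩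
    rw [← nsmul_eq_mul, ← Finset.sum_const, ← Finset.inter_eq_right.2 hsub1,
      ← Finset.inter_eq_right.2 hsub2, ← Finset.sum_ite_mem, ← Finset.sum_ite_mem,
      ← Finset.sum_add_distrib]
    refine Finset.sum_le_sum fun F hF => ?_
    have hTF := (mem_upF.1 hF).2
    have hpt : (Fintype.card K : ℝ) ^ t ≤ (Fintype.card K : ℝ) ^ (t+1) :=
      pow_le_pow_right₀ hq1 (by omega)
    have hte : (Fintype.card K : ℝ) ^ t ≤ (Fintype.card K : ℝ) ^ finrank K ↥(F ⊓ W) := by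
      refine pow_le_pow_right₀ hq1 ?_
      rw [← hT2]
      exact Submodule.finrank_mono (le_inf hTF hTW)
    by_cases h2 : F ∈ upF (polF f my) S0
    · rw [if_pos h2]
      split_ifs <;> linarith
    · rw [if_neg h2]
      split_ifs with h3
      · have := hW F h3 hTF
        rw [hT2] at this
        have := pow_le_pow_right₀ hq1 this
        linarith
      · linarith
  rw [← g1, ← g2, hW2, (aux_br_div_eq _ hq t).1, (aux_br_div_eq _ hq t).2] at key
  have hpos : 0 < (Fintype.card K : ℝ) ^ (t + 1) - (Fintype.card K : ℝ) ^ t := by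
    have := pow_lt_pow_right₀ (by linarith : (1:ℝ) < Fintype.card K) (show t < t + 1 by omega)
    linarith
  refine le_of_mul_le_mul_right ?_ hpos
  rw [show t + 1 + 1 = t + 2 by omega] at key
  linarith

lemma Ctx.fine_alpha_X {K V : Type*} [Field K] [Fintype K] [AddCommGroup V] [Module K V]
    [Fintype V]
    {f : V →ₗ[K] V →ₗ[K] K} {ν : ℕ} (c : Ctx f ν) {X : Finset (Submodule K V)} {t : ℕ}
    (hX : ∀ F ∈ X, F ∈ polF f (2 * t))
    {T : Submodule K V} (hT : TotallyIsotropic f T) (hT2 : finrank K T = t)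
    {W : Submodule K V} (hTW : T ≤ W)
    (hW2 : finrank K W = t + (t + 1))
    (hcov : ∀ z ∈ W, z ∉ T → ∀ G ∈ X, t ≤ finrank K ↥((T ⊔ Submodule.span K {z}) ⊓ G)) :
    (X.card : ℝ) ≤ NN (Fintype.card K) ν t (2 * t) + br (Fintype.card K) (2 * t + 1) := by
  have hsub : X ⊆ upF X T ∪ subsF W (2 * t) := by
    intro G hG
    rw [mem_union]
    by_cases hTG : T ≤ G
    · exact Or.inl (mem_upF.2 ⟨hG, hTG⟩)
    right
    have hGd := (mem_polF.1 (hX G hG)).2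
    have hlt := aux_not_le T G hTG
    obtain ⟨z0, hz0, hz0T⟩ : ∃ z ∈ W, z ∉ T := by
      by_contra hcon
      push Not at hcon
      have := Submodule.finrank_mono (show W ≤ T from hcon)
      omega
    have h1 := hcov z0 hz0 hz0T G hG
    have h2 := aux_inf_dim G T (T ⊔ Submodule.span K {z0}) le_sup_left
    rw [aux_fr_span T z0 hz0T, inf_comm G, inf_comm G] at h2
    have hWle : W ≤ (G ⊓ W) ⊔ T := by
      intro z hz
      by_cases hzT : z ∈ T
      · exact (le_sup_right : T ≤ _) hzT
      have h3 := hcov z hz hzT G hG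
      have h4 : ∃ y, y ∈ (T ⊔ Submodule.span K {z}) ⊓ G ∧ y ∉ T := by
        by_contra hcon
        push Not at hcon
        have := Submodule.finrank_mono
          (show (T ⊔ Submodule.span K {z}) ⊓ G ≤ T ⊓ G from fun y hy => ⟨hcon y hy, hy.2⟩)
        omega
      obtain ⟨y, ⟨hy1, hy2⟩, hyT⟩ := h4
      have e := aux_span_eq T z y hzT hy1 hyT
      have hzm : z ∈ T ⊔ Submodule.span K {z} :=
        (le_sup_right : _ ≤ T ⊔ Submodule.span K {z}) (Submodule.mem_span_singleton_self z)
      rw [← e] at hzm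
      have hyW : y ∈ W := ((aux_sup_span_le T W z).2 ⟨hTW, hz⟩) hy1
      exact ((aux_sup_span_le T _ y).2
        ⟨le_sup_right, (le_sup_left : G ⊓ W ≤ _) ⟨hy2, hyW⟩⟩) hzm
    have h5 := Submodule.finrank_mono hWle
    have h6 := Submodule.finrank_sup_add_finrank_inf_eq (G ⊓ W) T
    have h7 : (G ⊓ W) ⊓ T = T ⊓ G := by
      rw [inf_assoc, inf_eq_right.2 hTW, inf_comm]
    rw [h7] at h6
    have h8 : G ⊓ W = G := Submodule.eq_of_le_of_finrank_le inf_le_left (by omega)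
    exact mem_subsF.2 ⟨inf_eq_left.1 h8, hGd⟩
  have h1 := (card_le_card hsub).trans (card_union_le _ _)
  have h2 : (X.card : ℝ) ≤ (upF X T).card + (subsF W (2 * t)).card := by exact_mod_cast h1
  rw [aux_hyp_card W (2 * t) (by omega)] at h2
  have h3 := c.up_le hT hT2 (show t ≤ 2 * t by omega) hX
  linarith

lemma Ctx.fine {K V : Type*} [Field K] [Fintype K] [AddCommGroup V] [Module K V] [Fintype V]
    {f : V →ₗ[K] V →ₗ[K] K} {ν : ℕ} (c : Ctx f ν) {Y X : Finset (Submodule K V)} {my t : ℕ}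
    (hY : ∀ F ∈ Y, F ∈ polF f my) (hX : ∀ F ∈ X, F ∈ polF f (2 * t))
    (hc : ∀ F ∈ Y, ∀ G ∈ X, t ≤ finrank K ↥(F ⊓ G)) (hty : t + 2 ≤ my) (hy : my ≤ ν)
    {T : Submodule K V} (hT : TotallyIsotropic f T) (hT2 : finrank K T = t)
    (hTY : ∀ F ∈ Y, T ≤ F) {G : Submodule K V} (hG : G ∈ X) (hTG : ¬ T ≤ G) :
    ((Y.card : ℝ) ≤ (br (Fintype.card K) (t + 1) - 1) * NN (Fintype.card K) ν (t + 1) my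
      + br (Fintype.card K) (t + 1) * NN (Fintype.card K) ν (t + 2) my) ∨
    ((Y.card : ℝ) ≤ br (Fintype.card K) (t + 1) * NN (Fintype.card K) ν (t + 1) my
      - (br (Fintype.card K) (t + 1) - 1) * NN (Fintype.card K) ν (t + 2) my ∧
     (X.card : ℝ) ≤ NN (Fintype.card K) ν t (2 * t) + br (Fintype.card K) (2 * t + 1)) := by
  obtain ⟨U, hU1, hU2, hU3⟩ := aux_stepW T G t (2 * t) (mem_polF.1 (hX G hG)).2
    (by have := aux_not_le T G hTG; omega) (by omega)
  set W := T ⊔ U with hWdef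
  have hTW : T ≤ W := le_sup_left
  have hW2 : finrank K W = t + (t + 1) := by rw [hU2, hT2]; omega
  have hW : ∀ F ∈ Y, T ≤ F → finrank K T + 1 ≤ finrank K ↥(F ⊓ W) :=
    fun F hF hTF => hU3 F hTF (hc F hF G hG)
  by_cases hall : ∀ z ∈ W, z ∉ T → (TotallyIsotropic f (T ⊔ Submodule.span K {z}) ∧
      ∀ G ∈ X, t ≤ finrank K ↥((T ⊔ Submodule.span K {z}) ⊓ G))
  · right
    obtain ⟨z0, hz0, hz0T⟩ : ∃ z ∈ W, z ∉ T := by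
      by_contra hcon
      push Not at hcon
      have := Submodule.finrank_mono (show W ≤ T from hcon)
      omega
    have hperp : ∀ x ∈ T, ∀ z ∈ W, f x z = 0 := by
      intro x hx z hz
      by_cases hzT : z ∈ T
      · exact hT x hx z hzT
      · exact (hall z hz hzT).1 x ((le_sup_left : T ≤ _) hx) z
          ((le_sup_right : _ ≤ T ⊔ Submodule.span K {z}) (Submodule.mem_span_singleton_self z))
    have hUti : TotallyIsotropic f U := aux_ti_mono hU1 (mem_polF.1 (hX G hG)).1
    have hWti : TotallyIsotropic f W := by
      intro x hx y hy
      obtain ⟨a, ha, b, hb, rfl⟩ := Submodule.mem_sup.1 hx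
      obtain ⟨a', ha', b', hb', rfl⟩ := Submodule.mem_sup.1 hy
      have hb1 : b ∈ W := (le_sup_right : U ≤ W) hb
      have hb2 : b' ∈ W := (le_sup_right : U ≤ W) hb'
      have h1 : f b a' = 0 := by rw [aux_skew c.halt a' b, hperp a' ha' b hb1, neg_zero]
      simp [hT a ha a' ha', hperp a ha b' hb2, h1, hUti b hb b' hb']
    exact ⟨c.fine_alpha_Y hY hty hT2 hTY hTW hWti hW2 hW hz0 hz0T,
      c.fine_alpha_X hX hT hT2 hTW hW2 (fun z hz hzT => (hall z hz hzT).2)⟩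
  · left
    push Not at hall
    obtain ⟨z0, hz0, hz0T, hbad⟩ := hall
    refine c.fine_beta hY hX hc hty hy hT2 hTY hTW hW2 hW hz0 hz0T ?_
    rintro ⟨h1, h2⟩
    obtain ⟨G', hG', hlt⟩ := hbad h1
    exact absurd (h2 G' hG') (by omega)

lemma br_eq (q : ℝ) (hq : 2 ≤ q) (n : ℕ) : br q n * (q - 1) = q ^ n - 1 := by
  have h : q - 1 ≠ 0 := by linarith
  rw [br]; field_simp

lemma br_succ (q : ℝ) (hq : 2 ≤ q) (n : ℕ) : br q (n + 1) = q * br q n + 1 := by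
  have h : q - 1 ≠ 0 := by linarith
  rw [br, br]; field_simp; ring

lemma br_one (q : ℝ) (hq : 2 ≤ q) : br q 1 = 1 := by
  rw [br_succ q hq 0]; simp [br]

lemma br_ge (q : ℝ) (hq : 2 ≤ q) (n : ℕ) : q ^ n ≤ br q (n + 1) := by
  induction n with
  | zero => simp [br_one q hq]
  | succ n ih =>
    rw [br_succ q hq (n + 1), pow_succ]
    nlinarith

lemma br_le (q : ℝ) (hq : 2 ≤ q) (n : ℕ) : br q (n + 1) ≤ 2 * q ^ n := by
  have h := br_eq q hq (n + 1)
  have hp : 0 < q ^ n := by positivity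
  have : br q (n + 1) * (q - 1) ≤ 2 * q ^ n * (q - 1) := by
    rw [h, pow_succ]; nlinarith
  exact le_of_mul_le_mul_right this (by linarith)

lemma br_ge_one (q : ℝ) (hq : 2 ≤ q) (n : ℕ) : 1 ≤ br q (n + 1) :=
  (one_le_pow₀ (by linarith)).trans (br_ge q hq n)

lemma br_mono (q : ℝ) (hq : 2 ≤ q) {a b : ℕ} (h : a ≤ b) : br q a ≤ br q b := by
  have h1 := pow_le_pow_right₀ (by linarith : (1:ℝ) ≤ q) h
  rw [br, br]
  exact div_le_div_of_nonneg_right (by linarith) (by linarith)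

lemma RR_den (q : ℝ) (hq : 2 ≤ q) {a m : ℕ} (h : a < m) : 0 < q ^ m - q ^ a := by
  have := pow_lt_pow_right₀ (by linarith : (1:ℝ) < q) h
  linarith

lemma RR_ge (q : ℝ) (hq : 2 ≤ q) (ν m a e : ℕ) (ham : a < m) (he : e + m + a ≤ 2 * ν) :
    q ^ e ≤ RR q ν m a := by
  have h1 : (1:ℝ) ≤ q := by linarith
  rw [RR, le_div_iff₀ (RR_den q hq ham), mul_sub, ← pow_add, ← pow_add]
  have h2 : q ^ (e + m) ≤ q ^ (2 * ν - a) := pow_le_pow_right₀ h1 (by omega)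
  have h3 : q ^ a ≤ q ^ (e + a) := pow_le_pow_right₀ h1 (by omega)
  linarith

lemma RR_num (q : ℝ) (hq : 2 ≤ q) (ν a : ℕ) (h : a ≤ ν) : 0 ≤ q ^ (2 * ν - a) - q ^ a := by
  have := pow_le_pow_right₀ (by linarith : (1:ℝ) ≤ q) (show a ≤ 2 * ν - a by omega)
  linarith

lemma RR_anti (q : ℝ) (hq : 2 ≤ q) (ν m m' a : ℕ) (ham : a < m) (hmm : m ≤ m') (ha : a ≤ ν) :
    RR q ν m' a ≤ RR q ν m a := by
  rw [RR, RR]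
  have h1 := pow_le_pow_right₀ (by linarith : (1:ℝ) ≤ q) hmm
  exact div_le_div_of_nonneg_left (RR_num q hq ν a ha) (RR_den q hq ham) (by linarith)

lemma RR_anti_lt (q : ℝ) (hq : 2 ≤ q) (ν m m' a : ℕ) (ham : a < m) (hmm : m < m') (ha : a < ν) :
    RR q ν m' a < RR q ν m a := by
  rw [RR, RR]
  have h1 := pow_lt_pow_right₀ (by linarith : (1:ℝ) < q) hmm
  have h2 := pow_lt_pow_right₀ (by linarith : (1:ℝ) < q) (show a < 2 * ν - a by omega)
  exact div_lt_div_of_pos_left (by linarith) (RR_den q hq ham) (by linarith)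

lemma NN_ge_one (q : ℝ) (hq : 2 ≤ q) (ν a m : ℕ) (hm : m ≤ ν) : 1 ≤ NN q ν a m := by
  rw [NN]
  refine Finset.prod_induction (fun i => RR q ν m i) (fun x => (1:ℝ) ≤ x)
    (fun x y hx hy => one_le_mul_of_one_le_of_one_le hx hy) le_rfl fun i hi => ?_
  rw [Finset.mem_Ico] at hi
  simpa using RR_ge q hq ν m i 0 (by omega) (by omega)

/-- decay from excess 2 to 1 -/
lemma dec2 (q : ℝ) (hq : 2 ≤ q) (ν my mx t : ℕ) (ht : 1 ≤ t) (hy : t + 2 ≤ my) (hx : t + 1 ≤ mx)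
    (h1 : 2 * mx + my + t + 3 ≤ 2 * ν) :
    8 * (gg q t 2 * br q (mx - t + 1) ^ 2) ≤ 7 * (br q (t + 1) * RR q ν my (t + 1)) := by
  have hR := RR_ge q hq ν my (t + 1) (2 * mx + 2) (by omega) (by omega)
  have hb := br_ge q hq t
  have ha := br_le q hq (mx - t)
  have ha0 := br_nonneg q hq (mx - t + 1)
  have h3 : br q 3 ≤ 7 / 4 * q ^ 2 := by
    rw [br_succ q hq 2, br_succ q hq 1, br_one q hq]; nlinarith
  have h30 := br_nonneg q hq 3
  have hg : gg q t 2 = br q 3 ^ t := by simp [gg]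
  have h3t : br q 3 ^ t ≤ (7 / 8) * (q ^ t * q ^ t * q ^ t) := by
    have e1 : br q 3 ≤ 7 / 8 * (q * q * q) := by nlinarith [sq_nonneg q]
    calc br q 3 ^ t ≤ (7 / 8 * (q * q * q)) ^ t := pow_le_pow_left₀ h30 e1 t
      _ = (7/8)^t * (q ^ t * q ^ t * q ^ t) := by rw [mul_pow, mul_pow, mul_pow]
      _ ≤ _ := by
        refine mul_le_mul_of_nonneg_right ?_ (by positivity)
        exact pow_le_of_le_one (by norm_num) (by norm_num) (by omega)
  have ha2 : br q (mx - t + 1) ^ 2 ≤ 4 * (q ^ (mx - t) * q ^ (mx - t)) := by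
    calc _ ≤ (2 * q ^ (mx - t)) ^ 2 := pow_le_pow_left₀ ha0 ha 2
      _ = _ := by ring
  have hqp : ∀ n : ℕ, 0 < q ^ n := fun n => by positivity
  have e2 : q ^ (2 * mx + 2) = (q ^ t * q ^ t * (q ^ (mx - t) * q ^ (mx - t))) * q ^ 2 := by
    rw [← pow_add, ← pow_add, ← pow_add, ← pow_add]; congr 1; omega
  rw [hg]
  calc 8 * (br q 3 ^ t * br q (mx - t + 1) ^ 2)
      ≤ 8 * ((7 / 8) * (q ^ t * q ^ t * q ^ t) * (4 * (q ^ (mx - t) * q ^ (mx - t)))) := by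
        refine mul_le_mul_of_nonneg_left ?_ (by norm_num)
        exact mul_le_mul h3t ha2 (by positivity) (by positivity)
    _ = 7 * (q ^ t * ((q ^ t * q ^ t * (q ^ (mx - t) * q ^ (mx - t))) * 4)) := by ring
    _ ≤ 7 * (q ^ t * ((q ^ t * q ^ t * (q ^ (mx - t) * q ^ (mx - t))) * q ^ 2)) := by
        have : (4:ℝ) ≤ q ^ 2 := by nlinarith
        gcongr
    _ = 7 * (q ^ t * q ^ (2 * mx + 2)) := by rw [e2]
    _ ≤ _ := by
        refine mul_le_mul_of_nonneg_left ?_ (by norm_num)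
        exact mul_le_mul hb hR (by positivity) ((hqp t).le.trans hb)

lemma gg_nonneg (q : ℝ) (hq : 2 ≤ q) (t i : ℕ) : 0 ≤ gg q t i := by
  rw [gg]; split_ifs
  · exact br_nonneg q hq _
  · exact pow_nonneg (br_nonneg q hq _) _

lemma dec_step (q : ℝ) (hq : 2 ≤ q) (ν my mx t i : ℕ) (hi : 2 ≤ i)
    (hy : t + (i + 1) ≤ my) (hx : t + 1 ≤ mx)
    (h2 : 2 * my + mx + t + 3 ≤ 2 * ν) :
    gg q t (i + 1) * br q (mx - t + 1) ≤ gg q t i * RR q ν my (t + i) := by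
  have hR := RR_ge q hq ν my (t + i) (t + t + (mx - t) + 1) (by omega) (by omega)
  have ha := br_le q hq (mx - t)
  have ha0 := br_nonneg q hq (mx - t + 1)
  have hi0 := br_nonneg q hq (i + 1)
  have hi1 := br_ge_one q hq i
  have e1 : br q (i + 1 + 1) ≤ (q * q) * br q (i + 1) := by
    rw [br_succ q hq (i + 1)]
    have h5 : 1 ≤ q * q - q := by nlinarith
    nlinarith [mul_le_mul h5 hi1 (by norm_num) (by linarith)]
  have g1 : gg q t (i + 1) = br q (i + 1 + 1) ^ t := by
    rw [gg, if_neg (by omega)]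
  have g2 : gg q t i = br q (i + 1) ^ t := by rw [gg, if_neg (by omega)]
  rw [g1, g2]
  calc br q (i + 1 + 1) ^ t * br q (mx - t + 1)
      ≤ ((q * q) * br q (i + 1)) ^ t * (2 * q ^ (mx - t)) := by
        refine mul_le_mul (pow_le_pow_left₀ (br_nonneg q hq _) e1 t) ha ha0 (by positivity)
    _ = br q (i + 1) ^ t * (q ^ t * q ^ t * q ^ (mx - t) * 2) := by
        rw [mul_pow, mul_pow]; ring
    _ ≤ br q (i + 1) ^ t * (q ^ t * q ^ t * q ^ (mx - t) * q) := by gcongr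
    _ = br q (i + 1) ^ t * q ^ (t + t + (mx - t) + 1) := by rw [pow_succ, pow_add, pow_add]
    _ ≤ _ := by gcongr

lemma dec_two (q : ℝ) (hq : 2 ≤ q) (ν my mx t : ℕ) (ht : 1 ≤ t) (hx : t + 1 ≤ mx)
    (h1 : 2 * mx + my + t + 3 ≤ 2 * ν) (h2 : 2 * my + mx + t + 3 ≤ 2 * ν) (i : ℕ) (hi : 2 ≤ i) :
    t + i ≤ my → 
    8 * (gg q t i * (br q (mx - t + 1) ^ i * NN q ν (t + i) my)) ≤
      7 * (br q (t + 1) * NN q ν (t + 1) my) := by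
  induction i, hi using Nat.le_induction with
  | base =>
    intro h
    have := dec2 q hq ν my mx t ht h hx h1
    rw [NN_rec q ν (t + 1) my (by omega)]
    have hN := NN_nonneg q hq ν (t + 2) my (by omega)
    rw [show t + 1 + 1 = t + 2 by omega]
    have := mul_le_mul_of_nonneg_right this hN
    linarith
  | succ i hi ih =>
    intro h
    refine le_trans ?_ (ih (by omega))
    have hs := dec_step q hq ν my mx t i hi h hx h2
    rw [NN_rec q ν (t + i) my (by omega)]
    have hN := NN_nonneg q hq ν (t + i + 1) my (by omega)
    have hp : 0 ≤ br q (mx - t + 1) ^ i := pow_nonneg (br_nonneg q hq _) _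
    have := mul_le_mul_of_nonneg_right hs (mul_nonneg hp hN)
    rw [pow_succ, show t + (i + 1) = t + i + 1 by omega]
    linarith

lemma dec_one (q : ℝ) (hq : 2 ≤ q) (ν my mx t : ℕ) (ht : 1 ≤ t) (hx : t + 1 ≤ mx)
    (h1 : 2 * mx + my + t + 3 ≤ 2 * ν) (h2 : 2 * my + mx + t + 3 ≤ 2 * ν) (i : ℕ) (hi : 1 ≤ i)
    (h : t + i ≤ my) :
    gg q t i * (br q (mx - t + 1) ^ i * NN q ν (t + i) my) ≤
      br q (t + 1) * (br q (mx - t + 1) * NN q ν (t + 1) my) := by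
  rcases Nat.lt_or_ge 1 i with h3 | h3
  · have := dec_two q hq ν my mx t ht hx h1 h2 i h3 h
    have hN := NN_nonneg q hq ν (t + 1) my (by omega)
    have hb := br_nonneg q hq (t + 1)
    have ha := br_ge_one q hq (mx - t)
    have h5 := mul_nonneg hb hN
    nlinarith
  · have : i = 1 := by omega
    subst this
    simp [gg]

lemma both_one (q : ℝ) (hq : 2 ≤ q) (ν m₁ m₂ t : ℕ) (ht : 1 ≤ t) (hm : m₂ ≤ m₁)
    (hmt : t + 1 ≤ m₂) (hdim : 2 * m₁ + m₂ + t + 3 ≤ 2 * ν) :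
    2 * (br q (t + 1) * (br q (m₁ - t + 1) * br q (m₂ - t + 1))) ≤ RR q ν m₂ t := by
  have hR := RR_ge q hq ν m₂ t (t + (m₁ - t) + (m₂ - t) + 4) (by omega) (by omega)
  refine le_trans ?_ hR
  have e : q ^ (t + (m₁ - t) + (m₂ - t) + 4) = q ^ t * (q ^ (m₁ - t) * q ^ (m₂ - t)) * q ^ 4 := by
    rw [pow_add, pow_add, pow_add]; ring
  have hq4 : (16:ℝ) ≤ q ^ 4 := by
    calc (16:ℝ) = 2 ^ 4 := by norm_num
      _ ≤ q ^ 4 := pow_le_pow_left₀ (by norm_num) hq 4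
  rw [e]
  have b1 := br_le q hq t
  have b2 := br_le q hq (m₁ - t)
  have b3 := br_le q hq (m₂ - t)
  calc _ ≤ 2 * (2 * q ^ t * (2 * q ^ (m₁ - t) * (2 * q ^ (m₂ - t)))) := by
        refine mul_le_mul_of_nonneg_left ?_ (by norm_num)
        refine mul_le_mul b1 (mul_le_mul b2 b3 (br_nonneg q hq _) (by positivity))
          (mul_nonneg (br_nonneg q hq _) (br_nonneg q hq _)) (by positivity)
    _ = q ^ t * (q ^ (m₁ - t) * q ^ (m₂ - t)) * 16 := by ring
    _ ≤ _ := by gcongr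

lemma aR_mono (q : ℝ) (hq : 2 ≤ q) (ν m m' t : ℕ) (htm : t < m) (hmm : m ≤ m') (ht : t ≤ ν) :
    br q (m' - t + 1) * RR q ν m' t ≤ br q (m - t + 1) * RR q ν m t := by
  have hD := RR_num q hq ν t ht
  have d1 := RR_den q hq htm
  have d2 := RR_den q hq (show t < m' by omega)
  have hp : 0 < q ^ t := by positivity
  have hpm : q ^ m ≤ q ^ m' := pow_le_pow_right₀ (by linarith) hmm
  have e : ∀ n : ℕ, t < n → br q (n - t + 1) = (q * q ^ n - q ^ t) / (q ^ t * (q - 1)) := by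
    intro n hn
    have h1 : q ^ n = q ^ (n - t) * q ^ t := by rw [← pow_add]; congr 1; omega
    have h : q - 1 ≠ 0 := by linarith
    rw [br, h1, pow_succ]
    field_simp
  rw [e m htm, e m' (by omega), RR, RR, div_mul_div_comm, div_mul_div_comm]
  have hq1 : 0 < q - 1 := by linarith
  rw [div_le_div_iff₀ (by positivity) (by positivity)]
  have key : (q * q ^ m' - q ^ t) * (q ^ m - q ^ t) ≤ (q * q ^ m - q ^ t) * (q ^ m' - q ^ t) := by
    nlinarith [mul_nonneg (mul_nonneg hp.le hq1.le) (sub_nonneg.2 hpm)]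
  have h5 : 0 ≤ (q ^ (2 * ν - t) - q ^ t) * (q ^ t * (q - 1)) := by positivity
  nlinarith [mul_le_mul_of_nonneg_right key h5]

def ep (q : ℝ) (t : ℕ) : ℝ := 1 / (4 * q ^ t)

lemma ep_pos (q : ℝ) (hq : 2 ≤ q) (t : ℕ) : 0 < ep q t := by
  rw [ep]; positivity

lemma ep_mul (q : ℝ) (hq : 2 ≤ q) (t : ℕ) : ep q t * (4 * q ^ t) = 1 := by
  have : 0 < q ^ t := by positivity
  rw [ep]; field_simp

lemma ep_le (q : ℝ) (hq : 2 ≤ q) (t : ℕ) (ht : 1 ≤ t) : ep q t ≤ 1 / 8 := by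
  have h : q ≤ q ^ t := le_self_pow₀ (by linarith) (by omega)
  have := ep_mul q hq t
  have := ep_pos q hq t
  nlinarith

lemma ep_R (q : ℝ) (hq : 2 ≤ q) (ν m₁ m₂ t : ℕ) (hm : m₂ ≤ m₁)
    (hmt : t + 1 ≤ m₂) (hdim : 2 * m₁ + m₂ + t + 3 ≤ 2 * ν) :
    1 < ep q t ^ 2 * RR q ν m₂ t := by
  have hR := RR_ge q hq ν m₂ t (t + t + 5) (by omega) (by omega)
  have h1 := ep_mul q hq t
  have h0 := ep_pos q hq t
  have h5 : (32:ℝ) ≤ q ^ 5 := by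
    calc (32:ℝ) = 2 ^ 5 := by norm_num
      _ ≤ q ^ 5 := pow_le_pow_left₀ (by norm_num) hq 5
  have : ep q t ^ 2 * (q ^ t * q ^ t * 32) = 2 * (ep q t * (4 * q ^ t)) ^ 2 := by ring
  rw [h1] at this
  have h6 : q ^ t * q ^ t * 32 ≤ RR q ν m₂ t := by
    refine le_trans ?_ hR
    rw [pow_add, pow_add]; gcongr
  have := mul_le_mul_of_nonneg_left h6 (by positivity : 0 ≤ ep q t ^ 2)
  linarith

lemma err_bd (q : ℝ) (hq : 2 ≤ q) (ν my mx t : ℕ) (hy : t + 1 ≤ my) (hx : t + 1 ≤ mx)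
    (h2 : 2 * my + mx + t + 3 ≤ 2 * ν) :
    br q (t + 1) * br q (my - t + 1) ≤ ep q t * RR q ν mx t := by
  have hR := RR_ge q hq ν mx t (t + t + (my - t) + 4) (by omega) (by omega)
  have h1 := ep_mul q hq t
  have h0 := ep_pos q hq t
  have hq4 : (16:ℝ) ≤ q ^ 4 := by
    calc (16:ℝ) = 2 ^ 4 := by norm_num
      _ ≤ q ^ 4 := pow_le_pow_left₀ (by norm_num) hq 4
  calc br q (t + 1) * br q (my - t + 1) ≤ (2 * q ^ t) * (2 * q ^ (my - t)) :=
        mul_le_mul (br_le q hq t) (br_le q hq _) (br_nonneg q hq _) (by positivity)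
    _ = (ep q t * (4 * q ^ t)) * ((2 * q ^ t) * (2 * q ^ (my - t))) := by rw [h1, one_mul]
    _ = ep q t * (q ^ t * q ^ t * q ^ (my - t) * 16) := by ring
    _ ≤ ep q t * (q ^ t * q ^ t * q ^ (my - t) * q ^ 4) := by gcongr
    _ = ep q t * q ^ (t + t + (my - t) + 4) := by rw [pow_add, pow_add, pow_add]
    _ ≤ _ := by gcongr

lemma lead_small (q : ℝ) (hq : 2 ≤ q) (ν m₂ mx t : ℕ) (ht : 1 ≤ t) (hm : m₂ ≤ mx)
    (hmt : t + 1 ≤ m₂) (htν : m₂ ≤ ν) (h2t : m₂ < 2 * t) :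
    br q (mx - t + 1) * RR q ν mx t ≤ (1 - ep q t) * (br q (t + 1) * RR q ν m₂ t) := by
  refine (aR_mono q hq ν m₂ mx t (by omega) hm (by omega)).trans ?_
  have h1 : br q (m₂ - t + 1) ≤ br q t := br_mono q hq (by omega)
  have h2 := br_succ q hq t
  have h3 := br_nonneg q hq t
  have h4 : 2 * br q (m₂ - t + 1) ≤ br q (t + 1) := by nlinarith
  have h5 := ep_le q hq t ht
  have hR : 0 ≤ RR q ν m₂ t := by
    have := RR_ge q hq ν m₂ t 0 (by omega) (by omega)
    simp at this; linarith
  rw [← mul_assoc]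
  refine mul_le_mul_of_nonneg_right ?_ hR
  nlinarith [br_nonneg q hq (t + 1)]

lemma lead_big (q : ℝ) (hq : 2 ≤ q) (ν mx t : ℕ) (ht : 1 ≤ t) (hm : 2 * t + 1 ≤ mx)
    (htν : mx ≤ ν) :
    br q (mx - t + 1) * RR q ν mx t ≤ (1 - ep q t) * (br q (t + 1) * RR q ν (2 * t) t) := by
  refine (aR_mono q hq ν (2 * t + 1) mx t (by omega) hm (by omega)).trans ?_
  have hD := RR_num q hq ν t (by omega)
  have hu : 2 ≤ q ^ t := hq.trans (le_self_pow₀ (by linarith) (by omega))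
  have hq1 : 0 < q - 1 := by linarith
  rw [show 2 * t + 1 - t + 1 = t + 2 by omega, RR, RR, br, br, ep]
  rw [show 2 * t + 1 = t + t + 1 by omega, show 2 * t = t + t by omega]
  simp only [pow_succ, pow_add q t t, pow_add q t 2]
  generalize q ^ t = u at *
  generalize q ^ (2 * ν - t) - u = D at *
  have hp1 : 0 < u * q - 1 := by nlinarith
  have hp2 : 0 < u - 1 := by linarith
  have hu0 : 0 < u := by linarith
  have key : (u * (q * q) - 1) * (u - 1) * (4 * u) ≤ (4 * u - 1) * (u * q - 1) ^ 2 := by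
    have h1 : (u * q - 1) ^ 2 ≤ (2 * u * (q - 1)) ^ 2 :=
      pow_le_pow_left₀ hp1.le (by nlinarith) 2
    nlinarith
  have n1 : q - 1 ≠ 0 := hq1.ne'
  have n2 : u * q - 1 ≠ 0 := hp1.ne'
  have n3 : u - 1 ≠ 0 := hp2.ne'
  have n4 : u ≠ 0 := hu0.ne'
  have l1 : (u * (q ^ 0 * q * q) - 1) / (q - 1) * (D / (u * u * q - u))
      = ((u * (q * q) - 1) * D) / ((q - 1) * (u * (u * q - 1))) := by
    rw [div_mul_div_comm]
    congr 1 <;> ring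
  have l2 : (1 - 1 / (4 * u)) * ((u * q - 1) / (q - 1) * (D / (u * u - u)))
      = ((4 * u - 1) * (u * q - 1) * D) / ((4 * u) * ((q - 1) * (u * (u - 1)))) := by
    rw [show u * u - u = u * (u - 1) by ring]
    field_simp
  rw [l1, l2, div_le_div_iff₀ (by positivity) (by positivity)]
  have h9 := mul_le_mul_of_nonneg_right key (by positivity : 0 ≤ D * ((q - 1) * u))
  linarith

lemma beta_bd (q : ℝ) (hq : 2 ≤ q) (ν my t : ℕ) (hy : t + 2 ≤ my) 
    (h1 : 2 * (2 * t) + my + t + 3 ≤ 2 * ν) (ht : 1 ≤ t) :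
    (br q (t + 1) - 1) * RR q ν my (t + 1) + br q (t + 1) ≤
      (1 - ep q t) * (br q (t + 1) * RR q ν my (t + 1)) := by
  have hR := RR_ge q hq ν my (t + 1) (t + 2) (by omega) (by omega)
  have hb := br_le q hq t
  have h0 := ep_pos q hq t
  have he : ep q t * br q (t + 1) ≤ 1 / 2 := by
    have := mul_le_mul_of_nonneg_left hb h0.le
    have := ep_mul q hq t
    linarith
  have h2 : 2 * br q (t + 1) ≤ RR q ν my (t + 1) := by
    refine le_trans ?_ hR
    rw [pow_add]
    have h6 : 0 < q ^ t := by positivity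
    have h7 : (4:ℝ) ≤ q ^ 2 := by nlinarith
    have := mul_le_mul_of_nonneg_left h7 h6.le
    linarith
  have h3 : 0 ≤ RR q ν my (t + 1) := le_trans (by positivity) hR
  nlinarith [mul_le_mul_of_nonneg_right he h3]

lemma alpha_bd (q : ℝ) (hq : 2 ≤ q) (ν my t : ℕ) (ht : 1 ≤ t) (hy : t + 2 ≤ my)
    (hy2 : 2 * t ≤ my) (hy4 : t = 1 → 4 ≤ my) (hyν : my ≤ ν)
    (h2 : 2 * my + 2 * t + t + 3 ≤ 2 * ν) :
    RR q ν my (t + 1) * (br q (t + 1) * br q (2 * t + 1)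
      + (br q (t + 1) - 1) * NN q ν (t + 1) (2 * t))
      < (br q (t + 1) - 1) * (RR q ν (2 * t) t * NN q ν (t + 1) (2 * t)) := by
  have hR' : 1 ≤ RR q ν my (t + 1) := by
    simpa using RR_ge q hq ν my (t + 1) 0 (by omega) (by omega)
  rcases Nat.lt_or_ge 1 t with h | h
  · have hN : q ^ (4 * t + 2) ≤ NN q ν (t + 1) (2 * t) := by
      rw [NN_rec q ν (t + 1) (2 * t) (by omega)]
      have h3 := RR_ge q hq ν (2 * t) (t + 1) (4 * t + 2) (by omega) (by omega)
      have h4 := NN_ge_one q hq ν (t + 1 + 1) (2 * t) (by omega)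
      have h5 : 0 < q ^ (4 * t + 2) := by positivity
      nlinarith
    have hb1 : q ^ t ≤ br q (t + 1) - 1 := by
      have := br_ge q hq (t - 1)
      rw [show t - 1 + 1 = t by omega] at this
      rw [br_succ q hq t]
      have e : q ^ t = q * q ^ (t - 1) := by rw [← pow_succ']; congr 1; omega
      rw [e]; nlinarith
    have hNp : 0 < NN q ν (t + 1) (2 * t) := lt_of_lt_of_le (by positivity) hN
    have hbp : 0 < br q (t + 1) - 1 := lt_of_lt_of_le (by positivity) hb1
    have hM : 16 * (br q (t + 1) * br q (2 * t + 1)) ≤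
        (br q (t + 1) - 1) * NN q ν (t + 1) (2 * t) := by
      have hq6 : (64:ℝ) ≤ q ^ 6 := by
        calc (64:ℝ) = 2 ^ 6 := by norm_num
          _ ≤ q ^ 6 := pow_le_pow_left₀ (by norm_num) hq 6
      calc _ ≤ 16 * ((2 * q ^ t) * (2 * q ^ (2 * t))) := by
            refine mul_le_mul_of_nonneg_left ?_ (by norm_num)
            exact mul_le_mul (br_le q hq t) (br_le q hq _) (br_nonneg q hq _) (by positivity)
        _ = q ^ t * q ^ (2 * t) * 64 := by ring
        _ ≤ q ^ t * q ^ (2 * t) * q ^ 6 := by gcongr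
        _ = q ^ (t + 2 * t + 6) := by rw [pow_add, pow_add]
        _ ≤ q ^ (t + (4 * t + 2)) := pow_le_pow_right₀ (by linarith) (by omega)
        _ = q ^ t * q ^ (4 * t + 2) := by rw [pow_add]
        _ ≤ _ := mul_le_mul hb1 hN (by positivity) hbp.le
    have hRR : 4 * RR q ν my (t + 1) ≤ 3 * RR q ν (2 * t) t := by
      have h3 := RR_anti q hq ν (2 * t) my (t + 1) (by omega) hy2 (by omega)
      refine (mul_le_mul_of_nonneg_left h3 (by norm_num)).trans ?_
      have hD := RR_num q hq ν t (by omega)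
      have d1 := RR_den q hq (show t + 1 < 2 * t by omega)
      have d2 := RR_den q hq (show t < 2 * t by omega)
      have hDD : q * (q ^ (2 * ν - (t + 1)) - q ^ (t + 1)) ≤ q ^ (2 * ν - t) - q ^ t := by
        have e : q ^ (2 * ν - t) = q * q ^ (2 * ν - (t + 1)) := by
          rw [← pow_succ']; congr 1; omega
        have e2 : q ^ t ≤ q * q ^ (t + 1) := by
          rw [← pow_succ']; exact pow_le_pow_right₀ (by linarith) (by omega)
        rw [e]; linarith
      have hqp : 0 < q := by linarith
      have hkey : 4 * (q ^ (2 * t) - q ^ t) ≤ 3 * (q * (q ^ (2 * t) - q ^ (t + 1))) := by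
        have ht0 : 0 < q ^ t := by positivity
        have hqt : q ^ 2 ≤ q ^ t := pow_le_pow_right₀ (by linarith) (by omega)
        rw [show 2 * t = t + t by omega, pow_add, pow_succ]
        have : 4 * (q ^ t - 1) ≤ 3 * (q * (q ^ t - q)) := by
          have k1 := mul_le_mul_of_nonneg_left hqt (by linarith : 0 ≤ 3 * q - 4)
          have k2 : 0 ≤ (q - 2) * (3 * q ^ 2 - q - 2) :=
            mul_nonneg (by linarith) (by nlinarith)
          linarith
        nlinarith
      rw [RR, RR, ← mul_div_assoc, ← mul_div_assoc, div_le_div_iff₀ d1 d2]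
      have k1 := mul_le_mul_of_nonneg_right hDD (mul_nonneg (by norm_num : (0:ℝ) ≤ 3) d1.le)
      have k0 : 0 ≤ q ^ (2 * ν - (t + 1)) - q ^ (t + 1) := RR_num q hq ν (t + 1) (by omega)
      have k2 := mul_le_mul_of_nonneg_right hkey k0
      nlinarith
    have hP : 0 < (br q (t + 1) - 1) * NN q ν (t + 1) (2 * t) := by positivity
    nlinarith [mul_le_mul_of_nonneg_right hRR hP.le]
  · have ht1 : t = 1 := by omega
    subst ht1
    have h4 := hy4 rfl
    have e2 : br q 2 = q + 1 := by rw [br_succ q hq 1, br_one q hq]; ring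
    have e3 : br q 3 = q ^ 2 + q + 1 := by rw [br_succ q hq 2, e2]; ring
    norm_num [NN_self, e2, e3]
    have h3 := RR_anti q hq ν 4 my 2 (by omega) h4 (by omega)
    have h5 : q ^ 2 * (q + 1) * RR q ν 4 2 ≤ RR q ν 2 1 := by
      have e : q ^ (2 * ν - 1) = q * q ^ (2 * ν - 2) := by
        rw [← pow_succ']; congr 1; omega
      have d1 := RR_den q hq (show 2 < 4 by omega)
      have d2 := RR_den q hq (show 1 < 2 by omega)
      rw [RR, RR, ← mul_div_assoc, div_le_div_iff₀ d1 d2, e]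
      generalize q ^ (2 * ν - 2) = D
      have : (q * D - q ^ 1) * (q ^ 4 - q ^ 2) - q ^ 2 * (q + 1) * (D - q ^ 2) * (q ^ 2 - q ^ 1)
        = q ^ 3 * (q ^ 2 - 1) * (q ^ 2 - 1) := by ring
      have : 0 ≤ q ^ 3 * (q ^ 2 - 1) * (q ^ 2 - 1) := by
        have : 0 ≤ q ^ 2 - 1 := by nlinarith
        positivity
      linarith
    have h6 : (q + 1) * (q ^ 2 + q + 1) + q < q * (q ^ 2 * (q + 1)) := by
      nlinarith [mul_nonneg (sq_nonneg q) (sub_nonneg.2 hq), mul_nonneg (mul_nonneg (sq_nonneg q) (sub_nonneg.2 hq)) (by linarith : 0 ≤ q)]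
    have h7 : 0 < q := by linarith
    have hR4 : 1 ≤ RR q ν my 2 := hR'
    have h8 := mul_le_mul_of_nonneg_left h5 h7.le
    have h9 := mul_lt_mul_of_pos_left h6 (by linarith : 0 < RR q ν my 2)
    have h10 := mul_le_mul_of_nonneg_right h3 (by positivity : 0 ≤ q * (q ^ 2 * (q + 1)))
    linarith

lemma contr_num {ε b R A₁ A₂ P : ℝ} (hR : 1 < ε ^ 2 * R) (hb : 1 ≤ b) (h1 : 0 < A₁) (h2 : 0 < A₂)
    (hP : P ≤ (1 - ε ^ 2) * (b * R * (A₁ * A₂))) :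
    P < A₁ * (b * (R * A₂) - (b - 1) * A₂) := by
  have hA : 0 < A₁ * A₂ := mul_pos h1 h2
  have h3 : b < b * (ε ^ 2 * R) := by nlinarith
  have h4 := mul_lt_mul_of_pos_right h3 hA
  nlinarith

lemma core_num {ε b R Rx Ax Ay y0 y x e : ℝ} (hε : 0 ≤ ε) (hx0 : 0 ≤ x)
    (hy : y ≤ y0) (hy0 : 0 ≤ y0) (hAx : 0 ≤ Ax)
    (hl : y0 * Rx ≤ (1 - ε) * (b * R) * Ay) (hx : x ≤ Rx * Ax + e * Ax) (he : e ≤ ε * Rx) :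
    y * x ≤ (1 - ε ^ 2) * (b * R * (Ay * Ax)) := by
  have h1 : x ≤ Rx * (1 + ε) * Ax := by nlinarith [mul_le_mul_of_nonneg_right he hAx]
  calc y * x ≤ y0 * (Rx * (1 + ε) * Ax) := mul_le_mul hy h1 hx0 hy0
    _ = (y0 * Rx) * ((1 + ε) * Ax) := by ring
    _ ≤ ((1 - ε) * (b * R) * Ay) * ((1 + ε) * Ax) :=
        mul_le_mul_of_nonneg_right hl (by positivity)
    _ = _ := by ring

lemma Ctx.side {K V : Type*} [Field K] [Fintype K] [AddCommGroup V] [Module K V] [Fintype V]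
    {f : V →ₗ[K] V →ₗ[K] K} {ν : ℕ} (c : Ctx f ν) {Y X : Finset (Submodule K V)}
    {m₁ m₂ my mx t : ℕ} (ht : 1 ≤ t)
    (hm : m₂ ≤ m₁) (hmt : t + 1 ≤ m₂) (hdim : 2 * m₁ + m₂ + t + 3 ≤ 2 * ν)
    (h2t : m₂ ≤ 2 * t) (hex : t = 1 → 4 ≤ m₁)
    (hor : (my = m₁ ∧ mx = m₂) ∨ (my = m₂ ∧ mx = m₁))
    (hY : ∀ F ∈ Y, F ∈ polF f my) (hX : ∀ F ∈ X, F ∈ polF f mx)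
    (hc : ∀ F ∈ Y, ∀ G ∈ X, t ≤ finrank K ↥(F ⊓ G))
    {T : Submodule K V} (hT : TotallyIsotropic f T) (hT2 : finrank K T = t)
    (hTY : ∀ F ∈ Y, T ≤ F) (hYn : Y.Nonempty) {G : Submodule K V} (hG : G ∈ X) (hTG : ¬ T ≤ G) :
    ((Y.card : ℝ) * X.card < NN (Fintype.card K) ν (t + 1) m₁ *
      (br (Fintype.card K) (t + 1) * NN (Fintype.card K) ν t m₂
        - (br (Fintype.card K) (t + 1) - 1) * NN (Fintype.card K) ν (t + 1) m₂)) ∨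
    ∃ S, TotallyIsotropic f S ∧ finrank K S = t + 1 ∧ (∀ F ∈ Y, S ≤ F) ∧
      ∀ G ∈ X, t ≤ finrank K ↥(G ⊓ S) := by
  by_cases hS : ∃ S, TotallyIsotropic f S ∧ finrank K S = t + 1 ∧ (∀ F ∈ Y, S ≤ F) ∧
      ∀ G ∈ X, t ≤ finrank K ↥(G ⊓ S)
  · exact Or.inr hS
  left
  have hq := aux_qone K
  obtain ⟨i, Z, hi, hZ, hZ2, hZ3, hZ4⟩ := aux_tau hY hc hYn ⟨G, hG⟩
  have hty : t + 1 ≤ my := by omega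
  have htx : t + 1 ≤ mx := by omega
  have hyν : my ≤ ν := by omega
  have hxν : mx ≤ ν := by omega
  have d1 : 2 * mx + my + t + 3 ≤ 2 * ν := by omega
  have d2 : 2 * my + mx + t + 3 ≤ 2 * ν := by omega
  have hTG' : finrank K ↥(T ⊓ G) < t := by have := aux_not_le T G hTG; omega
  have hYT : upF Y T = Y := by
    ext F; rw [mem_upF]; exact ⟨fun h => h.1, fun h => ⟨h, hTY F h⟩⟩
  have bY0 := c.B hY hX hc hty (by omega) hyν hT2 hG hTG'
  rw [hYT] at bY0
  have hi1 : i = 1 → (X.card : ℝ) ≤ NN (Fintype.card K) ν t mx +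
      br (Fintype.card K) (t + 1) *
        (br (Fintype.card K) (my - t + 1) * NN (Fintype.card K) ν (t + 1) mx) := by
    rintro rfl
    exact c.D hY hX hc hty htx hxν hZ hZ2 hZ3 (fun h => hS ⟨Z, hZ, hZ2, h, hZ3⟩)
  have hi0 : i = 0 → (X.card : ℝ) ≤ NN (Fintype.card K) ν t mx := by
    rintro rfl
    have e : upF X Z = X := by
      ext F; rw [mem_upF]
      refine ⟨fun h => h.1, fun h => ⟨h, ?_⟩⟩
      by_contra hcon
      have h1 := aux_not_le Z F hcon
      have h2 := hZ3 F h
      rw [inf_comm] at h2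
      omega
    have := c.up_le hZ hZ2 (show t + 0 ≤ mx by omega) hX
    rwa [e] at this
  have hg1 := c.gen (i := i) (j := 0) hY hX hc (by omega) hyν hi hZ4 (Z := T) (by omega)
    (fun F hF => by rw [inf_eq_right.2 (hTY F hF), hT2])
  have hg2 := c.gen (Y := X) (X := Y) (i := 0) (j := i) hX hY
    (fun F hF G hG => by rw [inf_comm]; exact hc G hG F hF) (by omega) hxν (by omega)
    (fun Z' _ hZ' => by
      obtain ⟨F, hF⟩ := hYn
      exact ⟨F, hF, lt_of_le_of_lt (Submodule.finrank_mono inf_le_left) hZ'⟩) hZ2 hZ3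
  have hfine : mx = 2 * t → t + 2 ≤ my → _ := fun h1 h2 =>
    c.fine hY (h1 ▸ hX) hc h2 hyν hT hT2 hTY hG hTG
  clear hZ4 hZ3 hS hc hTY hYT hX hY hTG hTG'
  have hx0 : (0:ℝ) ≤ X.card := Nat.cast_nonneg _
  have hy0 : (0:ℝ) ≤ Y.card := Nat.cast_nonneg _
  generalize (X.card : ℝ) = x at *
  generalize (Y.card : ℝ) = y at *
  generalize (Fintype.card K : ℝ) = q at *
  have hε := ep_pos q hq t
  have hε8 := ep_le q hq t ht
  have hεR := ep_R q hq ν m₁ m₂ t hm hmt hdim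
  have hb1 := br_ge_one q hq t
  have hA1 : 1 ≤ NN q ν (t + 1) m₁ := NN_ge_one q hq _ _ _ (by omega)
  have hA2 : 1 ≤ NN q ν (t + 1) m₂ := NN_ge_one q hq _ _ _ (by omega)
  have hAy : 1 ≤ NN q ν (t + 1) my := NN_ge_one q hq _ _ _ (by omega)
  have hAx : 1 ≤ NN q ν (t + 1) mx := NN_ge_one q hq _ _ _ (by omega)
  have hAA : NN q ν (t + 1) my * NN q ν (t + 1) mx = NN q ν (t + 1) m₁ * NN q ν (t + 1) m₂ := by
    rcases hor with ⟨rfl, rfl⟩ | ⟨rfl, rfl⟩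
    · rfl
    · ring
  have hRx : RR q ν mx t ≤ RR q ν m₂ t := RR_anti q hq ν m₂ mx t (by omega) (by omega) (by omega)
  have hRx0 : 1 ≤ RR q ν mx t := by simpa using RR_ge q hq ν mx t 0 (by omega) (by omega)
  have hNt : ∀ m, t + 1 ≤ m → NN q ν t m = RR q ν m t * NN q ν (t + 1) m :=
    fun m h => NN_rec q ν t m (by omega)
  rw [hNt m₂ hmt]
  rw [hNt mx htx] at hi0 hi1
  have herr := err_bd q hq ν my mx t hty htx d2
  rcases Nat.lt_or_ge 1 i with hi2 | hi2
  · have hd := dec_two q hq ν my mx t ht htx d1 d2 i hi2 hi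
    refine contr_num hεR hb1 (by linarith) (by linarith) ?_
    have g0 : gg q t 0 = 1 := by simp [gg, br_one q hq]
    rw [g0, one_mul] at hg1
    simp only [pow_zero, one_mul, add_zero] at hg2
    rw [hNt mx htx] at hg2
    rw [← hAA]
    have hp : 0 ≤ br q (mx - t + 1) ^ i * NN q ν (t + i) my :=
      mul_nonneg (pow_nonneg (br_nonneg q hq _) _) (NN_nonneg q hq _ _ _ hyν)
    have h5 := mul_le_mul hg1 hg2 hx0 hp
    have h6 : 0 ≤ RR q ν mx t * NN q ν (t + 1) mx := by positivity
    have h7 := mul_le_mul_of_nonneg_right hd h6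
    have h8 : 0 ≤ br q (t + 1) * (NN q ν (t + 1) my * NN q ν (t + 1) mx) := by positivity
    have h9 := mul_le_mul_of_nonneg_right hRx h8
    have h10 : 0 ≤ RR q ν m₂ t * (br q (t + 1) * (NN q ν (t + 1) my * NN q ν (t + 1) mx)) :=
      mul_nonneg (by linarith) h8
    have h11 : (7:ℝ) / 8 ≤ 1 - ep q t ^ 2 := by nlinarith
    have h12 := mul_le_mul_of_nonneg_right h11 h10
    linarith
  · have hxb : x ≤ RR q ν mx t * NN q ν (t + 1) mx +
        (br q (t + 1) * br q (my - t + 1)) * NN q ν (t + 1) mx := by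
      rcases Nat.lt_or_ge 0 i with h | h
      · have := hi1 (by omega)
        linarith
      · have := hi0 (by omega)
        have h5 : 0 ≤ (br q (t + 1) * br q (my - t + 1)) * NN q ν (t + 1) mx :=
          mul_nonneg (mul_nonneg (br_nonneg q hq _) (br_nonneg q hq _)) (by linarith)
        linarith
    have fin : ∀ y0, y ≤ y0 → 0 ≤ y0 →
        y0 * RR q ν mx t ≤ (1 - ep q t) * (br q (t + 1) * RR q ν m₂ t) * NN q ν (t + 1) my →
        y * x < NN q ν (t + 1) m₁ * (br q (t + 1) * (RR q ν m₂ t * NN q ν (t + 1) m₂)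
          - (br q (t + 1) - 1) * NN q ν (t + 1) m₂) := by
      intro y0 h1 h2 h3
      refine contr_num hεR hb1 (by linarith) (by linarith) ?_
      rw [← hAA]
      exact core_num hε.le hx0 h1 h2 (by linarith) h3 hxb herr
    have fin2 : br q (mx - t + 1) * RR q ν mx t ≤
        (1 - ep q t) * (br q (t + 1) * RR q ν m₂ t) →
        y * x < NN q ν (t + 1) m₁ * (br q (t + 1) * (RR q ν m₂ t * NN q ν (t + 1) m₂)
          - (br q (t + 1) - 1) * NN q ν (t + 1) m₂) := by
      intro h
      refine fin _ bY0 (mul_nonneg (br_nonneg q hq _) (by linarith)) ?_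
      have := mul_le_mul_of_nonneg_right h (by linarith : 0 ≤ NN q ν (t + 1) my)
      linarith
    rcases Nat.lt_or_ge m₂ (2 * t) with h | h
    · exact fin2 (lead_small q hq ν m₂ mx t ht (by omega) hmt (by omega) h)
    have hm2 : m₂ = 2 * t := by omega
    rcases Nat.lt_or_ge (2 * t) mx with h' | h'
    · have := lead_big q hq ν mx t ht h' hxν
      rw [← hm2] at this
      exact fin2 this
    have hmx : mx = 2 * t := by omega
    have hmy : my = m₁ := by omega
    have hy2 : t + 2 ≤ my := by
      rcases Nat.lt_or_ge 1 t with h1 | h1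
      · omega
      · have := hex (by omega); omega
    have hR'0 : 1 ≤ RR q ν my (t + 1) := by
      simpa using RR_ge q hq ν my (t + 1) 0 (by omega) (by omega)
    have hN'' : 1 ≤ NN q ν (t + 2) my := NN_ge_one q hq _ _ _ hyν
    have hNy : NN q ν (t + 1) my = RR q ν my (t + 1) * NN q ν (t + 2) my :=
      NN_rec q ν (t + 1) my (by omega)
    rcases hfine hmx hy2 with hβ | ⟨hα1, hα2⟩
    · refine fin _ hβ ?_ ?_
      · have : 0 ≤ (br q (t + 1) - 1) * NN q ν (t + 1) my :=
          mul_nonneg (by linarith) (by linarith)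
        have : 0 ≤ br q (t + 1) * NN q ν (t + 2) my := mul_nonneg (by linarith) (by linarith)
        linarith
      · have hbb := beta_bd q hq ν my t hy2 (by omega) ht
        have e : RR q ν mx t = RR q ν m₂ t := by rw [hmx, hm2]
        rw [e, hNy]
        have h5 : 0 ≤ NN q ν (t + 2) my * RR q ν m₂ t := mul_nonneg (by linarith) (by linarith)
        have := mul_le_mul_of_nonneg_right hbb h5
        linarith
    · have hab := alpha_bd q hq ν my t ht hy2 (by omega) (fun h => by have := hex h; omega) hyν
        (by omega)
      rw [hNy] at hα1
      rw [hNt (2 * t) (by omega)] at hα2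
      rw [← hmy, hm2, hNy]
      have h5 : 0 ≤ RR q ν (2 * t) t * NN q ν (t + 1) (2 * t) + br q (2 * t + 1) := by
        rw [hmx] at hAx hRx0
        have := br_nonneg q hq (2 * t + 1)
        positivity
      have hy1 : 0 ≤ br q (t + 1) * (RR q ν my (t + 1) * NN q ν (t + 2) my) -
          (br q (t + 1) - 1) * NN q ν (t + 2) my := hy0.trans hα1
      have h6 := mul_le_mul hα1 hα2 hx0 hy1
      have h7 := mul_lt_mul_of_pos_right hab (by linarith : 0 < NN q ν (t + 2) my)
      have h8 : 0 ≤ (br q (t + 1) - 1) * NN q ν (t + 2) my * br q (2 * t + 1) :=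
        mul_nonneg (mul_nonneg (by linarith) (by linarith)) (br_nonneg q hq _)
      linarith

lemma Ctx.nontriv {K V : Type*} [Field K] [Fintype K] [AddCommGroup V] [Module K V] [Fintype V]
    {f : V →ₗ[K] V →ₗ[K] K} {ν : ℕ} (c : Ctx f ν) {m t : ℕ} (ht : 1 ≤ t) (htm : t + 1 ≤ m)
    (hmν : m + t + 1 ≤ 2 * ν) (hmν' : m ≤ ν)
    {S : Submodule K V} (hS : TotallyIsotropic f S) (hS2 : finrank K S = t + 1)
    {T : Submodule K V} (hT2 : finrank K T = t)
    (h : ∀ F ∈ C4 f S m t, T ≤ F) : False := by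
  have hq := aux_qone K
  have hall : ∀ H ∈ subsF S t, H = T := by
    intro H hH
    rw [mem_subsF] at hH
    by_contra hne
    have hTH : ¬ T ≤ H := fun h' =>
      hne (Submodule.eq_of_le_of_finrank_le h' (by omega)).symm
    obtain ⟨z, hzT, hzH⟩ := SetLike.not_le_iff_exists.1 hTH
    have hHti := aux_ti_mono hH.1 hS
    have h1 := c.card hHti hH.2 (show t ≤ m by omega)
    have h2 : upF (polF f m) H ⊆ upF (polF f m) (H ⊔ Submodule.span K {z}) := by
      intro F hF
      rw [mem_upF] at hF ⊢
      refine ⟨hF.1, (aux_sup_span_le _ _ _).2 ⟨hF.2, h F ⟨mem_polF.1 hF.1, ?_⟩ hzT⟩⟩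
      rw [← hH.2]
      exact Submodule.finrank_mono (le_inf hF.2 hH.1)
    have h3 : ((upF (polF f m) (H ⊔ Submodule.span K {z})).card : ℝ)
        ≤ NN (Fintype.card K) ν (t + 1) m :=
      aux_up_bound f (polF f m) (fun F hF => (mem_polF.1 hF).1) (t + 1) _
        (NN_nonneg _ hq _ _ _ hmν')
        (fun S hS hS2 => c.up_le hS hS2 htm (fun F hF => hF)) _
        (by rw [aux_fr_span H z hzH, hH.2])
    have h4 : ((upF (polF f m) H).card : ℝ) ≤
        ((upF (polF f m) (H ⊔ Submodule.span K {z})).card : ℝ) := by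
      exact_mod_cast card_le_card h2
    rw [h1, NN_rec _ ν t m (by omega)] at h4
    have h5 := RR_ge _ hq ν m t 1 (by omega) (by omega)
    have h6 := NN_ge_one _ hq ν (t + 1) m hmν'
    rw [pow_one] at h5
    nlinarith
  have h1 : (subsF S t).card ≤ 1 := Finset.card_le_one.2 fun a ha b hb => by
    rw [hall a ha, hall b hb]
  have h2 := aux_hyp_card S t hS2
  have h3 := br_ge _ hq t
  have h4 : (Fintype.card K : ℝ) ≤ (Fintype.card K : ℝ) ^ t :=
    le_self_pow₀ (by linarith) (by omega)
  have h5 : ((subsF S t).card : ℝ) ≤ 1 := by exact_mod_cast h1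
  linarith

lemma Ctx.ext {K V : Type*} [Field K] [Fintype K] [AddCommGroup V] [Module K V] [Fintype V]
    {f : V →ₗ[K] V →ₗ[K] K} {ν : ℕ} (c : Ctx f ν) {Y X : Finset (Submodule K V)}
    {my mx t : ℕ} (hty : t + 1 ≤ my) (htx : t + 1 ≤ mx) (hyν : my ≤ ν) (hxν : mx ≤ ν)
    (hY : ∀ F ∈ Y, F ∈ polF f my) (hX : ∀ F ∈ X, F ∈ polF f mx)
    {S : Submodule K V} (hS : TotallyIsotropic f S) (hS2 : finrank K S = t + 1)
    (hSY : ∀ F ∈ Y, S ≤ F) (hSX : ∀ G ∈ X, t ≤ finrank K ↥(G ⊓ S)) :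
    ((Y.card : ℝ) * X.card ≤ NN (Fintype.card K) ν (t + 1) my *
      (br (Fintype.card K) (t + 1) * NN (Fintype.card K) ν t mx
        - (br (Fintype.card K) (t + 1) - 1) * NN (Fintype.card K) ν (t + 1) mx)) ∧
    (NN (Fintype.card K) ν (t + 1) my *
      (br (Fintype.card K) (t + 1) * NN (Fintype.card K) ν t mx
        - (br (Fintype.card K) (t + 1) - 1) * NN (Fintype.card K) ν (t + 1) mx) ≤
      (Y.card : ℝ) * X.card → (∀ F, F ∈ Y ↔ F ∈ C3 f S my) ∧ (∀ F, F ∈ X ↔ F ∈ C4 f S mx t)) := by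
  have hq := aux_qone K
  have e1 := c.card hS hS2 hty
  have e2 := c.C4card htx hS hS2
  rw [← e1, ← e2]
  have s1 : Y ⊆ upF (polF f my) S := fun F hF => mem_upF.2 ⟨hY F hF, hSY F hF⟩
  have s2 : X ⊆ (polF f mx).filter (fun F => t ≤ finrank K ↥(F ⊓ S)) := fun F hF =>
    Finset.mem_filter.2 ⟨hX F hF, hSX F hF⟩
  have c1 := card_le_card s1
  have c2 := card_le_card s2
  have p1 : (0:ℝ) < (upF (polF f my) S).card := by
    rw [e1]; have := NN_ge_one _ hq ν (t + 1) my hyν; linarith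
  have p2 : (0:ℝ) < ((polF f mx).filter (fun F => t ≤ finrank K ↥(F ⊓ S))).card := by
    rw [e2, NN_rec _ ν t mx (by omega)]
    have h1 := NN_ge_one _ hq ν (t + 1) mx hxν
    have h2 : 1 ≤ RR (Fintype.card K) ν mx t := by
      simpa using RR_ge _ hq ν mx t 0 (by omega) (by omega)
    have h3 := br_ge_one _ hq t
    have h4 := mul_le_mul_of_nonneg_right h2 (by linarith : 0 ≤ NN (Fintype.card K) ν (t + 1) mx)
    have h5 := mul_le_mul_of_nonneg_left h4 (by linarith : 0 ≤ br (Fintype.card K : ℝ) (t + 1))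
    linarith
  generalize hU : (polF f mx).filter (fun F => t ≤ finrank K ↥(F ⊓ S)) = U at *
  norm_cast at p1 p2 ⊢
  refine ⟨Nat.mul_le_mul c1 c2, fun hle => ?_⟩
  have q1 : (upF (polF f my) S).card ≤ Y.card := by
    by_contra hcon
    push Not at hcon
    have := Nat.mul_lt_mul_of_lt_of_le hcon c2 p2
    omega
  have q2 : U.card ≤ X.card := by
    by_contra hcon
    push Not at hcon
    have := Nat.mul_lt_mul_of_le_of_lt c1 hcon p1
    omega
  have r1 := Finset.eq_of_subset_of_card_le s1 q1
  have r2 := Finset.eq_of_subset_of_card_le s2 q2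
  refine ⟨fun F => ?_, fun F => ?_⟩
  · rw [r1, mem_upF, mem_polF]; rfl
  · rw [r2, ← hU, Finset.mem_filter, mem_polF]; rfl

lemma Ctx.main {K V : Type*} [Field K] [Fintype K] [AddCommGroup V] [Module K V] [Fintype V]
    {f : V →ₗ[K] V →ₗ[K] K} {ν : ℕ} (c : Ctx f ν) {m₁ m₂ t : ℕ} (ht : 1 ≤ t)
    (hm : m₂ ≤ m₁) (hmt : t + 1 ≤ m₂) (hdim : 2 * m₁ + m₂ + t + 3 ≤ 2 * ν)
    (h2t : m₂ ≤ 2 * t) (hex : t = 1 → 4 ≤ m₁) {Y X : Finset (Submodule K V)}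
    (hY : ∀ F ∈ Y, F ∈ polF f m₁) (hX : ∀ F ∈ X, F ∈ polF f m₂)
    (hc : ∀ F ∈ Y, ∀ G ∈ X, t ≤ finrank K ↥(F ⊓ G))
    (hnt : ¬ ∃ T ∈ polar f t, (∀ F ∈ Y, T ≤ F) ∧ (∀ F ∈ X, T ≤ F))
    (hopt : NN (Fintype.card K) ν (t + 1) m₁ *
      (br (Fintype.card K) (t + 1) * NN (Fintype.card K) ν t m₂
        - (br (Fintype.card K) (t + 1) - 1) * NN (Fintype.card K) ν (t + 1) m₂) ≤
      (Y.card : ℝ) * X.card) :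
    ∃ S ∈ polar f (t + 1),
      (((∀ F, F ∈ Y ↔ F ∈ C3 f S m₁) ∧ (∀ F, F ∈ X ↔ F ∈ C4 f S m₂ t)) ∨
        (m₁ = m₂ ∧ (∀ F, F ∈ Y ↔ F ∈ C4 f S m₁ t) ∧ (∀ F, F ∈ X ↔ F ∈ C3 f S m₂))) := by
  have hq := aux_qone K
  have hA1 : 1 ≤ NN (Fintype.card K) ν (t + 1) m₁ := NN_ge_one _ hq _ _ _ (by omega)
  have hA2 : 1 ≤ NN (Fintype.card K) ν (t + 1) m₂ := NN_ge_one _ hq _ _ _ (by omega)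
  have hR2 : 1 ≤ RR (Fintype.card K) ν m₂ t := by
    simpa using RR_ge _ hq ν m₂ t 0 (by omega) (by omega)
  have hb1 := br_ge_one _ hq t
  have e1 := NN_rec (Fintype.card K) ν t m₁ (by omega)
  have e2 := NN_rec (Fintype.card K) ν t m₂ (by omega)
  have hpos : 0 < (Y.card : ℝ) * X.card := by
    refine lt_of_lt_of_le ?_ hopt
    rw [e2]
    have h4 := mul_le_mul_of_nonneg_right hR2 (by linarith : 0 ≤ NN (Fintype.card K) ν (t + 1) m₂)
    have h5 := mul_le_mul_of_nonneg_left h4 (by linarith : 0 ≤ br (Fintype.card K : ℝ) (t + 1))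
    exact mul_pos (by linarith) (by linarith)
  have hYn : Y.Nonempty := by
    rw [Finset.nonempty_iff_ne_empty]; rintro rfl; simp at hpos
  have hXn : X.Nonempty := by
    rw [Finset.nonempty_iff_ne_empty]; rintro rfl; simp at hpos
  have hc' : ∀ F ∈ X, ∀ G ∈ Y, t ≤ finrank K ↥(F ⊓ G) := fun F hF G hG => by
    rw [inf_comm]; exact hc G hG F hF
  obtain ⟨i, Z, hi, hZ, hZ2, hZ3, hZ4⟩ := aux_tau hY hc hYn hXn
  obtain ⟨j, W, hj, hW, hW2, hW3, hW4⟩ := aux_tau hX hc' hXn hYn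
  have core : ∀ (Q : Finset (Submodule K V)) (Z : Submodule K V), finrank K Z = t →
      (∀ G ∈ Q, t ≤ finrank K ↥(G ⊓ Z)) → ∀ G ∈ Q, Z ≤ G := by
    intro Q Z h1 h2 G hG
    by_contra hcon
    have h3 := aux_not_le Z G hcon
    have h4 := h2 G hG
    rw [inf_comm] at h4
    omega
  rcases Nat.eq_zero_or_pos j with rfl | hj0
  · -- the first family has a core
    have hWY := core Y W (by omega) hW3
    have : ∃ G ∈ X, ¬ W ≤ G := by
      by_contra hcon
      push Not at hcon
      exact hnt ⟨W, ⟨hW, by omega⟩, hWY, hcon⟩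
    obtain ⟨G, hG, hWG⟩ := this
    rcases c.side ht hm hmt hdim h2t hex (Or.inl ⟨rfl, rfl⟩) hY hX hc hW (by omega) hWY hYn hG hWG
      with h | ⟨S, hS, hS2, hSY, hSX⟩
    · linarith
    · refine ⟨S, ⟨hS, hS2⟩, Or.inl ?_⟩
      exact (c.ext (by omega) (by omega) (by omega) (by omega) hY hX hS hS2 hSY hSX).2 hopt
  rcases Nat.eq_zero_or_pos i with rfl | hi0
  · have hZX := core X Z (by omega) hZ3
    have : ∃ G ∈ Y, ¬ Z ≤ G := by
      by_contra hcon
      push Not at hcon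
      exact hnt ⟨Z, ⟨hZ, by omega⟩, hcon, hZX⟩
    obtain ⟨G, hG, hZG⟩ := this
    rw [mul_comm (Y.card : ℝ)] at hopt
    rcases c.side ht hm hmt hdim h2t hex (Or.inr ⟨rfl, rfl⟩) hX hY hc' hZ (by omega) hZX hXn hG hZG
      with h | ⟨S, hS, hS2, hSX, hSY⟩
    · linarith
    · have hext := c.ext (by omega) (by omega) (by omega) (by omega) hX hY hS hS2 hSX hSY
      rcases Nat.lt_or_ge m₂ m₁ with hlt | hge
      · exfalso
        have h1 := hopt.trans hext.1
        have h2 := RR_anti_lt _ hq ν m₂ m₁ t (by omega) hlt (by omega)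
        rw [e1, e2] at h1
        have h3 : 0 < br (Fintype.card K : ℝ) (t + 1) *
          (NN (Fintype.card K) ν (t + 1) m₁ * NN (Fintype.card K) ν (t + 1) m₂) := by positivity
        have h4 := mul_lt_mul_of_pos_right h2 h3
        linarith
      · have hmm : m₁ = m₂ := by omega
        subst hmm
        refine ⟨S, ⟨hS, hS2⟩, Or.inr ⟨rfl, ?_⟩⟩
        exact (hext.2 hopt).symm
  · exfalso
    have g1 := c.gen (i := i) (j := j) hY hX hc (by omega) (by omega) hi hZ4 hW2 hW3
    have g2 := c.gen (i := j) (j := i) hX hY hc' (by omega) (by omega) hj hW4 hZ2 hZ3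
    have k1 := dec_one _ hq ν m₁ m₂ t ht (by omega) (by omega) (by omega) i hi0 hi
    have k2 := dec_one _ hq ν m₂ m₁ t ht (by omega) (by omega) (by omega) j hj0 hj
    have k3 := both_one _ hq ν m₁ m₂ t ht hm hmt hdim
    have hεR := ep_R _ hq ν m₁ m₂ t hm hmt hdim
    have hε := ep_pos _ hq t
    have hε8 := ep_le _ hq t ht
    rw [e2] at hopt
    have b1 := br_nonneg _ hq (m₁ - t + 1)
    have b2 := br_nonneg _ hq (m₂ - t + 1)
    have n1 := NN_nonneg _ hq ν (t + i) m₁ (by omega)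
    have n2 := NN_nonneg _ hq ν (t + j) m₂ (by omega)
    have gi := gg_nonneg _ hq t i
    have gj := gg_nonneg _ hq t j
    have hx0 : (0:ℝ) ≤ X.card := Nat.cast_nonneg _
    generalize (X.card : ℝ) = x at *
    generalize (Y.card : ℝ) = y at *
    generalize (Fintype.card K : ℝ) = q at *
    refine absurd hopt (not_le.2 (contr_num hεR hb1 (by linarith) (by linarith) ?_))
    have s1 := mul_le_mul g1 g2 hx0 (by positivity)
    have s2 := mul_le_mul k1 k2 (by positivity) (by positivity)
    have hp : 0 ≤ br q (t + 1) * (NN q ν (t + 1) m₁ * NN q ν (t + 1) m₂) := by positivity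
    have s3 := mul_le_mul_of_nonneg_right k3 hp
    have h11 : (1:ℝ) / 2 ≤ 1 - ep q t ^ 2 := by nlinarith
    have s4 := mul_le_mul_of_nonneg_right h11
      (mul_nonneg (by linarith : 0 ≤ RR q ν m₂ t) hp)
    linarith

lemma Ctx.final {K V : Type*} [Field K] [Fintype K] [AddCommGroup V] [Module K V] [Fintype V]
    {f : V →ₗ[K] V →ₗ[K] K} {ν : ℕ} (c : Ctx f ν) {m₁ m₂ t : ℕ} (ht : 1 ≤ t)
    (hm : m₂ ≤ m₁) (hmt : t + 1 ≤ m₂) (hdim : 2 * m₁ + m₂ + t + 3 ≤ 2 * ν)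
    (h2t : m₂ ≤ 2 * t) (hex : t = 1 → 4 ≤ m₁) 
    (ℱ₁ ℱ₂ : Set (Submodule K V))
    (h1 : ℱ₁ ⊆ polar f m₁) (h2 : ℱ₂ ⊆ polar f m₂)
    (hcross : ∀ F₁ ∈ ℱ₁, ∀ F₂ ∈ ℱ₂, t ≤ finrank K ↥(F₁ ⊓ F₂))
    (hnt : ¬ ∃ T ∈ polar f t, (∀ F ∈ ℱ₁, T ≤ F) ∧ (∀ F ∈ ℱ₂, T ≤ F))
    (hmax : ∀ 𝒢₁ 𝒢₂ : Set (Submodule K V),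
      𝒢₁ ⊆ polar f m₁ → 𝒢₂ ⊆ polar f m₂ →
      (∀ G₁ ∈ 𝒢₁, ∀ G₂ ∈ 𝒢₂, t ≤ finrank K ↥(G₁ ⊓ G₂)) →
      (¬ ∃ T ∈ polar f t, (∀ F ∈ 𝒢₁, T ≤ F) ∧ (∀ F ∈ 𝒢₂, T ≤ F)) →
      𝒢₁.ncard * 𝒢₂.ncard ≤ ℱ₁.ncard * ℱ₂.ncard) :
    ∃ S ∈ polar f (t + 1),
      ((ℱ₁ = C3 f S m₁ ∧ ℱ₂ = C4 f S m₂ t) ∨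
        (m₁ = m₂ ∧ ℱ₁ = C4 f S m₁ t ∧ ℱ₂ = C3 f S m₂)) := by
  have hq := aux_qone K
  obtain ⟨S, hS⟩ : ∃ S, S ∈ upF (polF f (t + 1)) (⊥ : Submodule K V) := by
    have hb : TotallyIsotropic f (⊥ : Submodule K V) := by
      intro x hx y hy; simp [(Submodule.mem_bot K).1 hx]
    have h := c.card hb (finrank_bot K V) (show 0 ≤ t + 1 by omega)
    have h3 := NN_ge_one _ hq ν 0 (t + 1) (by omega)
    by_contra hcon
    push Not at hcon
    rw [Finset.eq_empty_of_forall_notMem hcon] at h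
    simp at h
    linarith
  have hS := mem_polF.1 (mem_upF.1 hS).1
  have hm1 := hmax (C3 f S m₁) (C4 f S m₂ t) (fun F hF => hF.1) (fun F hF => hF.1)
    (by
      intro F hF G hG
      refine hG.2.trans (Submodule.finrank_mono ?_)
      rw [inf_comm]
      exact inf_le_inf_right _ hF.2)
    (by
      rintro ⟨T, hT, _, hT4⟩
      exact c.nontriv ht hmt (by omega) (by omega) hS.1 hS.2 hT.2 hT4)
  have n3 : (C3 f S m₁).ncard = (upF (polF f m₁) S).card := by
    rw [← Set.ncard_coe_finset]
    congr 1
    ext F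
    simp only [Finset.mem_coe, mem_upF, mem_polF]; rfl
  have n4 : (C4 f S m₂ t).ncard
      = ((polF f m₂).filter (fun F => t ≤ finrank K ↥(F ⊓ S))).card := by
    rw [← Set.ncard_coe_finset]
    congr 1
    ext F
    simp only [Finset.mem_coe, Finset.mem_filter, mem_polF]; rfl
  have f1 : ∀ F, F ∈ (Set.toFinite ℱ₁).toFinset ↔ F ∈ ℱ₁ := fun F => by simp
  have f2 : ∀ F, F ∈ (Set.toFinite ℱ₂).toFinset ↔ F ∈ ℱ₂ := fun F => by simp
  rw [n3, n4, Set.ncard_eq_toFinset_card ℱ₁ (Set.toFinite ℱ₁),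
    Set.ncard_eq_toFinset_card ℱ₂ (Set.toFinite ℱ₂)] at hm1
  have hm2 : ((upF (polF f m₁) S).card : ℝ) *
      ((polF f m₂).filter (fun F => t ≤ finrank K ↥(F ⊓ S))).card ≤
      ((Set.toFinite ℱ₁).toFinset.card : ℝ) * (Set.toFinite ℱ₂).toFinset.card := by
    exact_mod_cast hm1
  rw [c.card hS.1 hS.2 (by omega), c.C4card hmt hS.1 hS.2] at hm2
  obtain ⟨S', hS', h⟩ := c.main ht hm hmt hdim h2t hex
    (fun F hF => mem_polF.2 (h1 ((f1 F).1 hF))) (fun F hF => mem_polF.2 (h2 ((f2 F).1 hF)))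
    (fun F hF G hG => hcross F ((f1 F).1 hF) G ((f2 G).1 hG))
    (by simpa only [f1, f2] using hnt) hm2
  simp only [f1, f2] at h
  refine ⟨S', hS', ?_⟩
  rcases h with ⟨ha, hb⟩ | ⟨hmm, ha, hb⟩
  · exact Or.inl ⟨Set.ext ha, Set.ext hb⟩
  · exact Or.inr ⟨hmm, Set.ext ha, Set.ext hb⟩

end helpers

theorem stmt_4
    (q ν m₁ m₂ t : ℕ) (hq : IsPrimePow q)
    {K : Type} [Field K] [Fintype K] (hK : Fintype.card K = q)
    (f : (Fin (2 * ν) → K) →ₗ[K] (Fin (2 * ν) → K) →ₗ[K] K)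
    (halt : ∀ x, f x x = 0)
    (hnd : ∀ x, (∀ y, f x y = 0) → x = 0)
    (hν : 0 < ν) (ht : 0 < t)
    (hm : m₂ ≤ m₁) (hmt : t + 1 ≤ m₂) (hdim : 2 * m₁ + m₂ + t + 3 ≤ 2 * ν)
    (hcase : m₂ ≤ 2 * t ∧ (m₁, m₂, t) ≠ (2, 2, 1) ∧ (m₁, m₂, t) ≠ (3, 2, 1))
    (ℱ₁ ℱ₂ : Set (Submodule K (Fin (2 * ν) → K)))
    (h1 : ℱ₁ ⊆ polar f m₁) (h2 : ℱ₂ ⊆ polar f m₂)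
    (hcross : ∀ F₁ ∈ ℱ₁, ∀ F₂ ∈ ℱ₂, t ≤ finrank K ↥(F₁ ⊓ F₂))
    (hnt : ¬ ∃ T ∈ polar f t, (∀ F ∈ ℱ₁, T ≤ F) ∧ (∀ F ∈ ℱ₂, T ≤ F))
    (hmax : ∀ 𝒢₁ 𝒢₂ : Set (Submodule K (Fin (2 * ν) → K)),
      𝒢₁ ⊆ polar f m₁ → 𝒢₂ ⊆ polar f m₂ →
      (∀ G₁ ∈ 𝒢₁, ∀ G₂ ∈ 𝒢₂, t ≤ finrank K ↥(G₁ ⊓ G₂)) →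
      (¬ ∃ T ∈ polar f t, (∀ F ∈ 𝒢₁, T ≤ F) ∧ (∀ F ∈ 𝒢₂, T ≤ F)) →
      𝒢₁.ncard * 𝒢₂.ncard ≤ ℱ₁.ncard * ℱ₂.ncard) :
    ∃ S ∈ polar f (t + 1),
      ((ℱ₁ = C3 f S m₁ ∧ ℱ₂ = C4 f S m₂ t) ∨
        (m₁ = m₂ ∧ ℱ₁ = C4 f S m₁ t ∧ ℱ₂ = C3 f S m₂)) := by
  have c : Ctx f ν := ⟨halt, hnd, by simp⟩
  refine c.final ht hm hmt hdim hcase.1 ?_ ℱ₁ ℱ₂ h1 h2 hcross hnt hmax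
  rintro rfl
  obtain ⟨ha, hb, hc⟩ := hcase
  have e : m₂ = 2 := by omega
  subst e
  by_contra hlt
  have : m₁ = 2 ∨ m₁ = 3 := by omega
  rcases this with rfl | rfl
  · exact hb rfl
  · exact hc rfl

end
end

section
/- Let q be a prime power and let ν, b, c, t be positive integers with 2ν ≥ 2b + c + 1, ν > b ≥ t + 1, and c ≥ t. For x ∈ {t, t+1, …, b} define g_{b,c}(x) = [x choose t]_q · [c−t+1 choose 1]_q^{x−t} · N'(x;b;2ν). Then g_{b,c} is strictly decreasing on {t, …, b}, i.e., g_{b,c}(x+1) < g_{b,c}(x) for every x ∈ {t, …, b−1}. -/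
open Finset Module

noncomputable section

variable {K V : Type*} [Field K] [AddCommGroup V] [Module K V]

lemma aux_pow_pos (q : ℕ) (hq : 2 ≤ q) (z : ℤ) (hz : 0 < z) : 0 < (q : ℚ) ^ z - 1 := by
  have h1 : (1 : ℚ) < q := by exact_mod_cast hq
  have := one_lt_zpow₀ h1 hz
  linarith

lemma aux_gauss (q x t : ℕ) :
    gaussBinom q (x + 1) t * ((q : ℚ) ^ ((x : ℤ) + 1 - t) - 1)
      = gaussBinom q x t * ((q : ℚ) ^ ((x : ℤ) + 1) - 1) := by
  have key : (∏ i ∈ Finset.range t, ((q : ℚ) ^ (((x + 1 : ℕ) : ℤ) - i) - 1)) *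
      ((q : ℚ) ^ ((x : ℤ) + 1 - t) - 1) =
      (∏ i ∈ Finset.range t, ((q : ℚ) ^ ((x : ℤ) - i) - 1)) * ((q : ℚ) ^ ((x : ℤ) + 1) - 1) := by
    have h1 := Finset.prod_range_succ (fun i : ℕ => ((q : ℚ) ^ (((x + 1 : ℕ) : ℤ) - i) - 1)) t
    have h2 := Finset.prod_range_succ' (fun i : ℕ => ((q : ℚ) ^ (((x + 1 : ℕ) : ℤ) - i) - 1)) t
    rw [h1] at h2
    simpa using h2
  unfold gaussBinom
  rw [Finset.prod_div_distrib, Finset.prod_div_distrib, div_mul_eq_mul_div, key,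
    div_mul_eq_mul_div]

lemma aux_gauss_pos (q x t : ℕ) (hq : 2 ≤ q) (h : t ≤ x) : 0 < gaussBinom q x t := by
  unfold gaussBinom
  refine Finset.prod_pos fun i hi => ?_
  have := Finset.mem_range.1 hi
  exact div_pos (aux_pow_pos q hq _ (by omega)) (aux_pow_pos q hq _ (by omega))

lemma aux_N_pos (q x b ν : ℕ) (hq : 2 ≤ q) (h : b < ν) : 0 < Nprime q x b ν := by
  unfold Nprime
  refine Finset.prod_pos fun i hi => ?_
  have := Finset.mem_Icc.1 hi
  exact div_pos (aux_pow_pos q hq _ (by omega)) (aux_pow_pos q hq _ (by omega))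

lemma aux_N_s9 (q x b ν : ℕ) (hx : x < b) :
    Nprime q x b ν = Nprime q (x + 1) b ν *
      (((q : ℚ) ^ (2 * ((ν : ℤ) - x)) - 1) / ((q : ℚ) ^ ((b : ℤ) - x) - 1)) := by
  unfold Nprime
  have e : b - x = (b - (x + 1)) + 1 := by omega
  rw [e, Finset.prod_Icc_succ_top (by omega), ← e]
  congr 4
  · congr 1
    omega
  · omega

lemma aux_ineq (q y d e t m : ℕ) (hq : 2 ≤ q) (hy : 1 ≤ y) (hd : 1 ≤ d) (he : 1 ≤ e)
    (hm : 2 * d + e + t ≤ m) :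
    ((q : ℚ) ^ (y + t) - 1) * ((q : ℚ) ^ e - 1) * ((q : ℚ) ^ d - 1) <
      ((q : ℚ) ^ y - 1) * ((q : ℚ) - 1) * ((q : ℚ) ^ m - 1) := by
  have h2 : (2 : ℚ) ≤ q := by exact_mod_cast hq
  have h1 : (1 : ℚ) ≤ q := by linarith
  obtain ⟨y, rfl⟩ : ∃ k, y = k + 1 := ⟨y - 1, by omega⟩
  have hY : (1 : ℚ) ≤ (q : ℚ) ^ y := one_le_pow₀ h1
  have hT : (1 : ℚ) ≤ (q : ℚ) ^ (t + 1) := one_le_pow₀ h1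
  have hA : (1 : ℚ) < (q : ℚ) ^ e := one_lt_pow₀ (by linarith) (by omega)
  have hB : (1 : ℚ) < (q : ℚ) ^ d := one_lt_pow₀ (by linarith) (by omega)
  have hM : (q : ℚ) ^ (t + 1) * ((q : ℚ) ^ e * (q : ℚ) ^ d) ≤ (q : ℚ) ^ m := by
    rw [← pow_add, ← pow_add]
    exact pow_le_pow_right₀ h1 (by omega)
  have hy1 : (q : ℚ) ^ y ≤ (q : ℚ) ^ (y + 1) - 1 := by
    rw [pow_succ]; nlinarith
  have hyt : (q : ℚ) ^ (y + 1 + t) = (q : ℚ) ^ y * (q : ℚ) ^ (t + 1) := by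
    rw [← pow_add]; congr 1; omega
  rw [hyt]
  generalize (q : ℚ) ^ y = Y at *
  generalize (q : ℚ) ^ (t + 1) = T at *
  generalize (q : ℚ) ^ e = A at *
  generalize (q : ℚ) ^ d = B at *
  generalize (q : ℚ) ^ m = M at *
  generalize (q : ℚ) ^ (y + 1) = Z at *
  have hAB : 0 < (A - 1) * (B - 1) := mul_pos (by linarith) (by linarith)
  have hTM : T * ((A - 1) * (B - 1)) ≤ M - 1 := by
    have : (A - 1) * (B - 1) ≤ A * B - 1 := by nlinarith
    nlinarith [mul_le_mul_of_nonneg_left this (by linarith : (0 : ℚ) ≤ T)]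
  have hM0 : 0 < M - 1 := lt_of_lt_of_le (by positivity) hTM
  calc (Y * T - 1) * (A - 1) * (B - 1) < Y * T * ((A - 1) * (B - 1)) := by nlinarith
    _ = Y * (T * ((A - 1) * (B - 1))) := by ring
    _ ≤ Y * (M - 1) := mul_le_mul_of_nonneg_left hTM (by linarith)
    _ ≤ ((Z - 1) * (q - 1)) * (M - 1) := by
      apply mul_le_mul_of_nonneg_right _ hM0.le
      nlinarith

theorem stmt_9
    (q ν b c t : ℕ) (hq : IsPrimePow q)
    (hν : 0 < ν) (ht : 0 < t) (hc : t ≤ c) (hb : t + 1 ≤ b) (hbν : b < ν)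
    (hdim : 2 * b + c + 1 ≤ 2 * ν) :
    ∀ x : ℕ, t ≤ x → x < b →
      gaussBinom q (x + 1) t * gaussBinom q (c - t + 1) 1 ^ (x + 1 - t) *
          Nprime q (x + 1) b ν <
        gaussBinom q x t * gaussBinom q (c - t + 1) 1 ^ (x - t) *
          Nprime q x b ν := by
  intro x htx hxb
  have h2 : 2 ≤ q := hq.two_le
  have hqq : (0 : ℚ) < (q : ℚ) - 1 := by
    have : (2 : ℚ) ≤ q := by exact_mod_cast h2
    linarith
  have hineq := aux_ineq q (x + 1 - t) (b - x) (c - t + 1) t (2 * (ν - x)) h2 (by omega)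
    (by omega) (by omega) (by omega)
  have hg := aux_gauss q x t
  have hgp := aux_gauss_pos q x t h2 htx
  have hNp := aux_N_pos q (x + 1) b ν h2 hbν
  have hE : gaussBinom q (c - t + 1) 1 = ((q : ℚ) ^ (c - t + 1) - 1) / ((q : ℚ) - 1) := by
    unfold gaussBinom
    rw [Finset.prod_range_one]
    simp only [Nat.cast_zero, sub_zero, zpow_natCast, pow_one]
  have hEp := aux_gauss_pos q (c - t + 1) 1 h2 (by omega)
  have p1 := aux_pow_pos q h2 ((x : ℤ) + 1 - t) (by omega)
  have p2 := aux_pow_pos q h2 ((b : ℤ) - x) (by omega)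
  rw [aux_N_s9 q x b ν hxb]
  have z1 : (x : ℤ) + 1 - t = ((x + 1 - t : ℕ) : ℤ) := by omega
  have z2 : (b : ℤ) - x = ((b - x : ℕ) : ℤ) := by omega
  have z3 : 2 * ((ν : ℤ) - x) = ((2 * (ν - x) : ℕ) : ℤ) := by omega
  have z4 : (x : ℤ) + 1 = ((x + 1 - t + t : ℕ) : ℤ) := by omega
  rw [z4, ← z4, z1, z4, zpow_natCast, zpow_natCast] at hg
  rw [z1, zpow_natCast] at p1
  rw [z2, zpow_natCast] at p2
  rw [z2, z3, zpow_natCast, zpow_natCast]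
  have hpw : gaussBinom q (c - t + 1) 1 ^ (x + 1 - t) =
      gaussBinom q (c - t + 1) 1 ^ (x - t) * gaussBinom q (c - t + 1) 1 := by
    rw [← pow_succ]; congr 1; omega
  rw [hpw]
  have hPp := pow_pos hEp (x - t)
  generalize gaussBinom q (c - t + 1) 1 ^ (x - t) = P at *
  rw [hE]
  rw [← eq_div_iff p1.ne'] at hg
  rw [hg]
  generalize gaussBinom q x t = G at *
  generalize Nprime q (x + 1) b ν = N at *
  generalize (q : ℚ) ^ (x + 1 - t + t) - 1 = X at *
  generalize (q : ℚ) ^ (x + 1 - t) - 1 = Y at *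
  generalize (q : ℚ) ^ (b - x) - 1 = D at *
  generalize (q : ℚ) ^ (2 * (ν - x)) - 1 = M at *
  generalize (q : ℚ) ^ (c - t + 1) - 1 = E at *
  generalize (q : ℚ) - 1 = Q at *
  have hlt : X * E / (Y * Q) < M / D := by
    rw [div_lt_div_iff₀ (by positivity) p2]
    linarith
  have hpos : 0 < G * P * N := by positivity
  calc G * X / Y * (P * (E / Q)) * N = G * P * N * (X * E / (Y * Q)) := by field_simp
    _ < G * P * N * (M / D) := mul_lt_mul_of_pos_left hlt hpos
    _ = G * P * (N * (M / D)) := by ring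

end
end

section
/- Let q be a prime power and let ν, m₁, m₂, t be positive integers with ν > m₁ ≥ t and ν > m₂ ≥ t. Suppose ℱ₁ ⊆ 𝒫_{m₁} and ℱ₂ ⊆ 𝒫_{m₂} are nonempty maximal cross t-intersecting families. For i ∈ {1,2}, let 𝒮ᵢ be the set of all t-covers of ℱᵢ of dimension τ_t(ℱᵢ). Then 𝒮₁ and 𝒮₂ are cross t-intersecting, i.e., dim(S₁ ∩ S₂) ≥ t for all S₁ ∈ 𝒮₁ and S₂ ∈ 𝒮₂. -/
open Finset Module

noncomputable section

variable {K V : Type*} [Field K] [AddCommGroup V] [Module K V]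

theorem ext_step {n : ℕ} {K : Type} [Field K]
    (f : (Fin (2 * n) → K) →ₗ[K] (Fin (2 * n) → K) →ₗ[K] K)
    (halt : ∀ v, f v v = 0)
    (hnd : ∀ v, (∀ w, f v w = 0) → v = 0)
    (S B : Submodule K (Fin (2 * n) → K))
    (hS : TotallyIsotropic f S) (hB : TotallyIsotropic f B) (hlt : finrank K B < n) :
    ∃ v, (∀ b ∈ B, f b v = 0) ∧ v ∉ B ⊔ S := by
  by_contra hcon
  push Not at hcon
  have hAlt : LinearMap.IsAlt f := halt
  have hrefl : LinearMap.BilinForm.IsRefl f := hAlt.isRefl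
  have hN : LinearMap.BilinForm.Nondegenerate f := by
    refine ⟨hnd, ?_⟩
    intro v hv
    exact hnd v fun w => hrefl w v (hv w)
  have e1 := LinearMap.BilinForm.finrank_orthogonal hN B
  set P := LinearMap.BilinForm.orthogonal f B with hP
  have hmem : ∀ x, x ∈ P ↔ ∀ b ∈ B, f b x = 0 := fun x => Iff.rfl
  have hPT : P ≤ LinearMap.BilinForm.orthogonal f P := by
    intro x hx y hy
    change f y x = 0
    obtain ⟨b, hb, s, hs, rfl⟩ := Submodule.mem_sup.1 (hcon x ((hmem x).1 hx))
    obtain ⟨c, hc, r, hr, rfl⟩ := Submodule.mem_sup.1 (hcon y ((hmem y).1 hy))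
    have h1 : f c (b + s) = 0 := (hmem _).1 hx c hc
    have h2 : f b (c + r) = 0 := (hmem _).1 hy b hb
    have h3 : f b r = 0 := by
      have := hB b hb c hc
      rw [map_add, this, zero_add] at h2
      exact h2
    have h4 : f r b = 0 := hrefl b r h3
    rw [map_add f c r, LinearMap.add_apply, h1, map_add (f r), h4, hS r hr s hs]
    simp
  have e2 := LinearMap.BilinForm.finrank_orthogonal hN P
  have e3 := Submodule.finrank_mono hPT
  simp only [Module.finrank_fin_fun] at e1 e2
  omega

theorem ext_avoid {n : ℕ} {K : Type} [Field K]
    (f : (Fin (2 * n) → K) →ₗ[K] (Fin (2 * n) → K) →ₗ[K] K)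
    (halt : ∀ v, f v v = 0)
    (hnd : ∀ v, (∀ w, f v w = 0) → v = 0)
    (S T : Submodule K (Fin (2 * n) → K))
    (hS : TotallyIsotropic f S) (hT : TotallyIsotropic f T) (k : ℕ)
    (hk : finrank K T + k ≤ n) :
    ∃ B, TotallyIsotropic f B ∧ finrank K B = finrank K T + k ∧ T ≤ B ∧ S ⊓ B ≤ S ⊓ T := by
  induction k with
  | zero => exact ⟨T, hT, rfl, le_rfl, le_rfl⟩
  | succ k ih =>
    obtain ⟨B, hB, hd, hTB, hSB⟩ := ih (by omega)
    obtain ⟨v, hv, hvn⟩ := ext_step f halt hnd S B hS hB (by omega)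
    have hAlt : LinearMap.IsAlt f := halt
    have hrefl : LinearMap.IsRefl f := hAlt.isRefl
    have hvB : v ∉ B := fun h => hvn (Submodule.mem_sup_left h)
    refine ⟨B ⊔ Submodule.span K {v}, ?_, ?_, hTB.trans le_sup_left, ?_⟩
    · intro x hx y hy
      obtain ⟨b, hb, s, hs, rfl⟩ := Submodule.mem_sup.1 hx
      obtain ⟨c, hc, r, hr, rfl⟩ := Submodule.mem_sup.1 hy
      obtain ⟨a, rfl⟩ := Submodule.mem_span_singleton.1 hs
      obtain ⟨d, rfl⟩ := Submodule.mem_span_singleton.1 hr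
      have h4 : f v c = 0 := hrefl c v (hv c hc)
      simp [hB b hb c hc, hv b hb, h4, halt v]
    · have hv0 : v ≠ 0 := by
        rintro rfl
        exact hvB B.zero_mem
      have hdis : B ⊓ Submodule.span K {v} = ⊥ := by
        rw [← disjoint_iff, Submodule.disjoint_span_singleton' hv0]
        exact hvB
      have := Submodule.finrank_sup_add_finrank_inf_eq B (Submodule.span K {v})
      rw [hdis, finrank_bot, finrank_span_singleton hv0] at this
      omega
    · rintro x ⟨hxS, hx⟩
      refine hSB ⟨hxS, ?_⟩
      obtain ⟨b, hb, s, hs, rfl⟩ := Submodule.mem_sup.1 hx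
      obtain ⟨a, rfl⟩ := Submodule.mem_span_singleton.1 hs
      by_cases ha : a = 0
      · simpa [ha] using hb
      · exfalso
        apply hvn
        have h1 : a • v ∈ B ⊔ S := by
          have := Submodule.sub_mem _ (Submodule.mem_sup_right (S := B) hxS)
            (Submodule.mem_sup_left (T := S) hb)
          simpa using this
        exact (Submodule.smul_mem_iff _ ha).1 h1

theorem stmt_10
    (q ν m₁ m₂ t : ℕ) (hq : IsPrimePow q)
    {K : Type} [Field K] [Fintype K] (hK : Fintype.card K = q)
    (f : (Fin (2 * ν) → K) →ₗ[K] (Fin (2 * ν) → K) →ₗ[K] K)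
    (halt : ∀ v, f v v = 0)
    (hnd : ∀ v, (∀ w, f v w = 0) → v = 0)
    (ht : 0 < t) (hm₁ : t ≤ m₁) (hm₂ : t ≤ m₂) (hm₁ν : m₁ < ν) (hm₂ν : m₂ < ν)
    (ℱ₁ ℱ₂ : Set (Submodule K (Fin (2 * ν) → K)))
    (h1ne : ℱ₁.Nonempty) (h2ne : ℱ₂.Nonempty)
    (h1 : ℱ₁ ⊆ polar f m₁) (h2 : ℱ₂ ⊆ polar f m₂)
    (hcross : ∀ F₁ ∈ ℱ₁, ∀ F₂ ∈ ℱ₂, t ≤ finrank K ↥(F₁ ⊓ F₂))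
    (hmax : ∀ 𝒢₁ 𝒢₂ : Set (Submodule K (Fin (2 * ν) → K)),
      𝒢₁ ⊆ polar f m₁ → 𝒢₂ ⊆ polar f m₂ →
      (∀ G₁ ∈ 𝒢₁, ∀ G₂ ∈ 𝒢₂, t ≤ finrank K ↥(G₁ ⊓ G₂)) →
      ℱ₁ ⊆ 𝒢₁ → ℱ₂ ⊆ 𝒢₂ → 𝒢₁ = ℱ₁ ∧ 𝒢₂ = ℱ₂) :
    ∀ S₁ S₂ : Submodule K (Fin (2 * ν) → K),
      IsTCover f t ℱ₁ S₁ → finrank K S₁ = tauCover f t ℱ₁ →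
      IsTCover f t ℱ₂ S₂ → finrank K S₂ = tauCover f t ℱ₂ →
      t ≤ finrank K ↥(S₁ ⊓ S₂) := by
  intro S₁ S₂ hc₁ _ hc₂ hd₂
  obtain ⟨F, hF⟩ := h1ne
  have hle : finrank K S₂ ≤ m₁ := by
    rw [hd₂]
    refine Nat.sInf_le ⟨F, ⟨(h1 hF).1, fun G hG => hcross F hF G hG⟩, (h1 hF).2⟩
  obtain ⟨B, hB, hBd, hSB, hinf⟩ := ext_avoid f halt hnd S₁ S₂ hc₁.1 hc₂.1
    (m₁ - finrank K S₂) (by omega)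
  have hBm : B ∈ polar f m₁ := ⟨hB, by omega⟩
  have hmx := hmax (insert B ℱ₁) ℱ₂ (Set.insert_subset hBm h1) h2 (by
    rintro G (rfl | hG) G₂ hG₂
    · exact (hc₂.2 G₂ hG₂).trans (Submodule.finrank_mono (inf_le_inf_right _ hSB))
    · exact hcross G hG G₂ hG₂) (Set.subset_insert _ _) le_rfl
  have hBF : B ∈ ℱ₁ := hmx.1 ▸ Set.mem_insert B ℱ₁
  exact (hc₁.2 B hBF).trans (Submodule.finrank_mono hinf)

end
end
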